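/- arXiv:2206.12620 — 12 statements merged into one kernel-verified Lean document; each statement's English description precedes it below -/
import Mathlib

section
/- Let u0 : [0,∞) → ℝ be nonnegative, right-continuous, of locally bounded variation, and suppose there exists α > 0 with u0(t) ≥ α for all t ∈ [0,α). Then there exists a function ℓ : [0,∞) → ℝ of locally bounded variation satisfying the nonlocal free-boundary equation ℓ(t) = u0(t) + |{ s ∈ [0,t] : ℓ(t−s) > s }| for every t ∈ [0,∞), where |·| denotes one-dimensional Lebesgue measure. -/
open MeasureTheory Set

/-!
The right-hand side of the equation is monotone in `ℓ` and, by continuity of measure from below,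
commutes with suprema of increasing sequences. Iterating it from `u0` therefore increases to a
solution, for any datum.

For the bounded variation, write `r = t - s`. Lags `s ∈ [0, t]` that do not contribute at time `t`
correspond to `r ∈ [0, t]` with `r + ℓ r ≤ t`, and these `r` form a set that grows with `t`. Hence
the nonlocal term is `t` minus a nondecreasing function of `t` as soon as `ℓ` is measurable, and
measurability passes through the iteration.
-/

open Filter Topology

section BoundedVariation

theorem locallyBoundedVariationOn_Ici_iff {α E : Type*} [LinearOrder α] [PseudoEMetricSpace E]
    {f : α → E} {a : α} :
    LocallyBoundedVariationOn f (Ici a) ↔ ∀ b > a, BoundedVariationOn f (Icc a b) := by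
  constructor
  · intro hf b hab
    exact (hf a b self_mem_Ici hab.le).mono fun x hx => ⟨hx.1, hx⟩
  · intro hf b c _ _
    rcases le_or_gt c a with hca | hac
    · refine BoundedVariationOn.of_subsingleton fun x hx y hy => ?_
      exact (le_antisymm (hx.2.2.trans hca) hx.1).trans (le_antisymm hy.1 (hy.2.2.trans hca))
    · exact (hf c hac).mono fun x hx => ⟨hx.1, hx.2.2⟩

variable {α E : Type*} [LinearOrder α] [SeminormedAddCommGroup E] {f g : α → E} {s : Set α}

theorem eVariationOn_sub_le (f g : α → E) (s : Set α) :
    eVariationOn (f - g) s ≤ eVariationOn f s + eVariationOn g s := by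
  refine iSup_le fun ⟨n, u, hu, hus⟩ => ?_
  calc ∑ i ∈ Finset.range n, edist ((f - g) (u (i + 1))) ((f - g) (u i))
    _ ≤ ∑ i ∈ Finset.range n,
          (edist (f (u (i + 1))) (f (u i)) + edist (g (u (i + 1))) (g (u i))) := by
        gcongr with i
        simpa only [Pi.sub_apply, sub_eq_add_neg, edist_neg_neg] using
          edist_add_add_le (f (u (i + 1))) (-g (u (i + 1))) (f (u i)) (-g (u i))
    _ ≤ eVariationOn f s + eVariationOn g s := by
        rw [Finset.sum_add_distrib]
        exact add_le_add (eVariationOn.sum_le hu hus) (eVariationOn.sum_le hu hus)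

theorem locallyBoundedVariationOn_sub (hf : LocallyBoundedVariationOn f s)
    (hg : LocallyBoundedVariationOn g s) : LocallyBoundedVariationOn (f - g) s :=
  fun a b ha hb =>
    ne_top_of_le_ne_top (ENNReal.add_ne_top.2 ⟨hf a b ha hb, hg a b ha hb⟩)
      (eVariationOn_sub_le f g _)

theorem aemeasurable_restrict_of_locallyBoundedVariationOn [TopologicalSpace α]
    [OrderClosedTopology α] [MeasurableSpace α] [BorelSpace α]
    {f : α → ℝ} {s : Set α} {μ : Measure α}
    (hs : MeasurableSet s) (hf : LocallyBoundedVariationOn f s) :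
    AEMeasurable f (μ.restrict s) := by
  obtain ⟨p, q, hp, hq, rfl⟩ := hf.exists_monotoneOn_sub_monotoneOn
  exact (aemeasurable_restrict_of_monotoneOn hs hp).sub (aemeasurable_restrict_of_monotoneOn hs hq)

end BoundedVariation

/-- The set of lags `s ∈ [0, t]` with `ℓ (t - s) > s`, whose measure is the nonlocal term of the
equation at time `t`. -/
def activeLags (ℓ : ℝ → ℝ) (t : ℝ) : Set ℝ :=
  {s | s ∈ Icc 0 t ∧ ℓ (t - s) > s}

/-- The times `r ∈ [0, t]` whose contribution has ended by time `t`, i.e. `r + ℓ r ≤ t`; they are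
the `t - s` for the lags `s ∈ [0, t]` outside `activeLags ℓ t`. -/
def expiredTimes (ℓ : ℝ → ℝ) (t : ℝ) : Set ℝ :=
  {r | r ∈ Icc 0 t ∧ r + ℓ r ≤ t}

/-- The right-hand side of the free-boundary equation as an operator on `ℓ`; solutions of the
equation are functions agreeing with their image on `[0, ∞)`. -/
noncomputable def freeBoundaryMap (u0 ℓ : ℝ → ℝ) (t : ℝ) : ℝ :=
  u0 t + volume.real (activeLags ℓ t)

/-- The solution of the free-boundary equation obtained as the pointwise supremum of the iterates
of `freeBoundaryMap u0` started at `u0`. -/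
noncomputable def freeBoundarySolution (u0 : ℝ → ℝ) (t : ℝ) : ℝ :=
  ⨆ n, (freeBoundaryMap u0)^[n] u0 t

section FreeBoundary

variable {u0 ℓ : ℝ → ℝ} {t : ℝ}

theorem activeLags_subset_Icc : activeLags ℓ t ⊆ Icc 0 t :=
  fun _ hs => hs.1

theorem volume_activeLags_ne_top : volume (activeLags ℓ t) ≠ ⊤ :=
  measure_ne_top_of_subset activeLags_subset_Icc measure_Icc_lt_top.ne

theorem activeLags_mono (t : ℝ) : Monotone fun ℓ => activeLags ℓ t :=
  fun _ _ h _ hs => ⟨hs.1, hs.2.trans_le (h _)⟩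

theorem activeLags_iSup {ι : Type*} [Nonempty ι] {f : ι → ℝ → ℝ}
    (hf : ∀ r, BddAbove (range fun i => f i r)) (t : ℝ) :
    activeLags (fun r => ⨆ i, f i r) t = ⋃ i, activeLags (f i) t := by
  ext s
  simp only [activeLags, mem_ofPred_eq, mem_iUnion, gt_iff_lt, lt_ciSup_iff (hf _),
    exists_and_left]

theorem monotone_freeBoundaryMap (u0 : ℝ → ℝ) : Monotone (freeBoundaryMap u0) :=
  fun _ _ h t =>
    add_le_add_right (measureReal_mono (activeLags_mono t h) volume_activeLags_ne_top) _

theorem le_freeBoundaryMap (u0 ℓ : ℝ → ℝ) : u0 ≤ freeBoundaryMap u0 ℓ :=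
  fun _ => le_add_of_nonneg_right measureReal_nonneg

theorem freeBoundaryMap_le (u0 ℓ : ℝ → ℝ) (t : ℝ) :
    freeBoundaryMap u0 ℓ t ≤ u0 t + volume.real (Icc 0 t) :=
  add_le_add_right (measureReal_mono activeLags_subset_Icc measure_Icc_lt_top.ne) _

theorem tendsto_freeBoundaryMap_iSup {f : ℕ → ℝ → ℝ} (hf : Monotone f)
    (hbdd : ∀ r, BddAbove (range fun n => f n r)) (u0 : ℝ → ℝ) (t : ℝ) :
    Tendsto (fun n => freeBoundaryMap u0 (f n) t) atTop
      (𝓝 (freeBoundaryMap u0 (fun r => ⨆ n, f n r) t)) := by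
  refine tendsto_const_nhds.add
    ((ENNReal.tendsto_toReal volume_activeLags_ne_top).comp ?_)
  rw [activeLags_iSup hbdd]
  exact tendsto_measure_iUnion_atTop ((activeLags_mono t).comp hf)

theorem monotone_iterate_freeBoundaryMap (u0 : ℝ → ℝ) :
    Monotone fun n => (freeBoundaryMap u0)^[n] u0 :=
  (monotone_freeBoundaryMap u0).monotone_iterate_of_le_map (le_freeBoundaryMap u0 u0)

theorem bddAbove_range_iterate_freeBoundaryMap (u0 : ℝ → ℝ) (t : ℝ) :
    BddAbove (range fun n => (freeBoundaryMap u0)^[n] u0 t) := by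
  refine ⟨u0 t + volume.real (Icc 0 t), forall_mem_range.2 fun n => ?_⟩
  calc (freeBoundaryMap u0)^[n] u0 t
    _ ≤ (freeBoundaryMap u0)^[n + 1] u0 t := monotone_iterate_freeBoundaryMap u0 n.le_succ t
    _ ≤ u0 t + volume.real (Icc 0 t) := by
        rw [Function.iterate_succ_apply']
        exact freeBoundaryMap_le _ _ t

theorem isFixedPt_freeBoundarySolution (u0 : ℝ → ℝ) :
    Function.IsFixedPt (freeBoundaryMap u0) (freeBoundarySolution u0) := by
  have hmono := monotone_iterate_freeBoundaryMap u0
  have hbdd := bddAbove_range_iterate_freeBoundaryMap u0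
  funext t
  have himage : Tendsto (fun n => (freeBoundaryMap u0)^[n + 1] u0 t) atTop
      (𝓝 (freeBoundaryMap u0 (freeBoundarySolution u0) t)) := by
    simp only [Function.iterate_succ_apply']
    exact tendsto_freeBoundaryMap_iSup hmono hbdd u0 t
  have hiterate : Tendsto (fun n => (freeBoundaryMap u0)^[n] u0 t) atTop
      (𝓝 (freeBoundarySolution u0 t)) :=
    tendsto_atTop_ciSup (fun _ _ hmn => hmono hmn t) (hbdd t)
  exact tendsto_nhds_unique himage (hiterate.comp (tendsto_add_atTop_nat 1))

theorem expiredTimes_subset_Icc : expiredTimes ℓ t ⊆ Icc 0 t :=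
  fun _ hr => hr.1

theorem monotone_measureReal_expiredTimes (ℓ : ℝ → ℝ) :
    Monotone fun t => volume.real (expiredTimes ℓ t) :=
  fun _ _ hst => measureReal_mono
    (fun _ hr => ⟨⟨hr.1.1, hr.1.2.trans hst⟩, hr.2.trans hst⟩)
    (measure_ne_top_of_subset expiredTimes_subset_Icc measure_Icc_lt_top.ne)

theorem nullMeasurableSet_expiredTimes (hℓ : AEMeasurable ℓ (volume.restrict (Ici 0))) (t : ℝ) :
    NullMeasurableSet (expiredTimes ℓ t) := by
  have hle : NullMeasurableSet {r | r + ℓ r ≤ t} (volume.restrict (Icc 0 t)) :=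
    nullMeasurableSet_le
      (aemeasurable_id.add (hℓ.mono_measure (Measure.restrict_mono Icc_subset_Ici_self le_rfl)))
      aemeasurable_const
  rw [nullMeasurableSet_restrict measurableSet_Icc.nullMeasurableSet, inter_comm] at hle
  exact hle

theorem preimage_sub_Icc_sdiff_expiredTimes (ℓ : ℝ → ℝ) (t : ℝ) :
    (t - ·) ⁻¹' (Icc 0 t \ expiredTimes ℓ t) = activeLags ℓ t := by
  ext s
  simp only [expiredTimes, activeLags, mem_preimage, Set.mem_sdiff, mem_ofPred_eq, mem_Icc]
  grind

theorem measureReal_activeLags (hℓ : AEMeasurable ℓ (volume.restrict (Ici 0))) (ht : 0 ≤ t) :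
    volume.real (activeLags ℓ t) = t - volume.real (expiredTimes ℓ t) := by
  have hexpired := nullMeasurableSet_expiredTimes hℓ t
  have hreflect : volume.real (activeLags ℓ t) = volume.real (Icc 0 t \ expiredTimes ℓ t) := by
    rw [← preimage_sub_Icc_sdiff_expiredTimes]
    exact (Measure.measurePreserving_sub_left volume t).measureReal_preimage
      (measurableSet_Icc.nullMeasurableSet.diff hexpired)
  have hsplit := measureReal_inter_add_sdiff₀ (μ := volume) (s := Icc 0 t) hexpired
    measure_Icc_lt_top.ne
  rw [inter_eq_right.2 expiredTimes_subset_Icc, Real.volume_real_Icc_of_le ht] at hsplit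
  linarith

theorem locallyBoundedVariationOn_freeBoundaryMap (hu0 : LocallyBoundedVariationOn u0 (Ici 0))
    (hℓ : AEMeasurable ℓ (volume.restrict (Ici 0))) :
    LocallyBoundedVariationOn (freeBoundaryMap u0 ℓ) (Ici 0) := by
  let expired : ℝ → ℝ := fun t => volume.real (expiredTimes ℓ t)
  have heq : EqOn (u0 - (expired - id)) (freeBoundaryMap u0 ℓ) (Ici 0) := fun t ht => by
    simp only [freeBoundaryMap, measureReal_activeLags hℓ ht, Pi.sub_apply, id, expired]
    ring
  have hexpired : LocallyBoundedVariationOn expired (Ici 0) :=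
    ((monotone_measureReal_expiredTimes ℓ).monotoneOn _).locallyBoundedVariationOn
  have hid : LocallyBoundedVariationOn id (Ici (0 : ℝ)) :=
    (monotone_id.monotoneOn _).locallyBoundedVariationOn
  intro a b ha hb
  rw [BoundedVariationOn, ← eVariationOn.congr (heq.mono inter_subset_left)]
  exact locallyBoundedVariationOn_sub hu0 (locallyBoundedVariationOn_sub hexpired hid) a b ha hb

theorem aemeasurable_freeBoundarySolution (hu0 : LocallyBoundedVariationOn u0 (Ici 0)) :
    AEMeasurable (freeBoundarySolution u0) (volume.restrict (Ici 0)) := by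
  have hiterate : ∀ n, AEMeasurable ((freeBoundaryMap u0)^[n] u0) (volume.restrict (Ici 0)) := by
    intro n
    induction n with
    | zero => exact aemeasurable_restrict_of_locallyBoundedVariationOn measurableSet_Ici hu0
    | succ n ih =>
      rw [Function.iterate_succ_apply']
      exact aemeasurable_restrict_of_locallyBoundedVariationOn measurableSet_Ici
        (locallyBoundedVariationOn_freeBoundaryMap hu0 ih)
  exact AEMeasurable.iSup hiterate

theorem locallyBoundedVariationOn_freeBoundarySolution
    (hu0 : LocallyBoundedVariationOn u0 (Ici 0)) :
    LocallyBoundedVariationOn (freeBoundarySolution u0) (Ici 0) := by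
  rw [← isFixedPt_freeBoundarySolution u0]
  exact locallyBoundedVariationOn_freeBoundaryMap hu0 (aemeasurable_freeBoundarySolution hu0)

end FreeBoundary

theorem mancala_freeBoundary_existence_general
    (u0 : ℝ → ℝ) (hu0_bv : ∀ a > (0 : ℝ), BoundedVariationOn u0 (Set.Icc 0 a)) :
    ∃ ℓ : ℝ → ℝ,
      (∀ a > (0 : ℝ), BoundedVariationOn ℓ (Set.Icc 0 a)) ∧
      (∀ t ≥ (0 : ℝ),
        ℓ t = u0 t + (volume {s : ℝ | s ∈ Set.Icc 0 t ∧ ℓ (t - s) > s}).toReal) := by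
  have hu0 := locallyBoundedVariationOn_Ici_iff.2 hu0_bv
  refine ⟨freeBoundarySolution u0, ?_, fun t _ => ?_⟩
  · exact locallyBoundedVariationOn_Ici_iff.1 (locallyBoundedVariationOn_freeBoundarySolution hu0)
  · exact (congrFun (isFixedPt_freeBoundarySolution u0) t).symm

/-- Existence of a solution `ℓ` of locally bounded variation to the
nonlocal free-boundary equation
`ℓ(t) = u0(t) + |{ s ∈ [0,t] : ℓ(t−s) > s }|`, given a nonnegative, right-continuous,
locally BV datum `u0` with `u0 ≥ α > 0` on `[0,α)`. -/
theorem mancala_freeBoundary_existence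
    (u0 : ℝ → ℝ)
    (hu0_nonneg : ∀ t ≥ (0 : ℝ), 0 ≤ u0 t)
    (hu0_rc : ∀ t ≥ (0 : ℝ), ContinuousWithinAt u0 (Set.Ici t) t)
    (hu0_bv : ∀ a > (0 : ℝ), BoundedVariationOn u0 (Set.Icc 0 a))
    (α : ℝ) (hα : 0 < α)
    (hu0_pos : ∀ t ∈ Set.Ico (0 : ℝ) α, α ≤ u0 t) :
    ∃ ℓ : ℝ → ℝ,
      (∀ a > (0 : ℝ), BoundedVariationOn ℓ (Set.Icc 0 a)) ∧
      (∀ t ≥ (0 : ℝ),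
        ℓ t = u0 t + (volume {s : ℝ | s ∈ Set.Icc 0 t ∧ ℓ (t - s) > s}).toReal) :=
  mancala_freeBoundary_existence_general u0 hu0_bv
end

section
/- Let u0 : [0,∞) → ℝ be nonnegative, right-continuous, of locally bounded variation, and suppose there exists α > 0 with u0(t) ≥ α for all t ∈ [0,α). If ℓ₁ and ℓ₂ are two functions of locally bounded variation on [0,∞) both satisfying the nonlocal free-boundary equation ℓ(t) = u0(t) + |{ s ∈ [0,t] : ℓ(t−s) > s }| for every t ∈ [0,∞), then ℓ₁ = ℓ₂. -/
open MeasureTheory Set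

/-!
Reflecting `s ↦ t - s`, the measure in the equation is the inflow at `t`: the measure of the times
`r ≤ t` with `t < r + ℓ r`, so the equation says `ℓ = u0 + inflow`. Only the values of `ℓ` on
`[0, T)` affect the inflow at `t ∈ [T, T + δ)` as soon as `ℓ ≥ δ` on `[T, T + δ)`, because then
every `r ∈ [T, t]` contributes. Uniqueness thus reduces to a positive lower bound for `ℓ` to the
right of each `T`.

For `T < α` the bound comes from `u0`. For `T ≥ α` it comes from conservation of mass: if the
inflow at `T` vanished, then `r + ℓ r ≤ T` for almost every `r ≤ T`, and Tonelli's theorem would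
give `∫ ℓ = ∫ inflow` on `[0, T]`, hence `∫ u0 = 0`. Tonelli's theorem is applied to a measurable
envelope of `ℓ`, which has the same inflow.
-/

open scoped ENNReal

lemma measure_toMeasurable_inter_eq_zero {X : Type*} [MeasurableSpace X] {μ : Measure X}
    [SFinite μ] {s t : Set X} (ht : MeasurableSet t) (hst : Disjoint s t) :
    μ (toMeasurable μ s ∩ t) = 0 := by
  rw [Measure.measure_toMeasurable_inter_of_sFinite ht, hst.inter_eq, measure_empty]

theorem exists_measurable_ge_forall_measure_inter_lt_eq {X β : Type*} [MeasurableSpace X]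
    (μ : Measure X) [SFinite μ] [CompleteLinearOrder β] [DenselyOrdered β] [TopologicalSpace β]
    [OrderTopology β] [SecondCountableTopology β] [MeasurableSpace β] [BorelSpace β] (f : X → β) :
    ∃ g : X → β, Measurable g ∧ f ≤ g ∧ ∀ h : X → β, Measurable h → ∀ A, MeasurableSet A →
      μ (A ∩ {x | h x < g x}) = μ (A ∩ {x | h x < f x}) := by
  classical
  obtain ⟨D, hD_countable, hD_dense⟩ := TopologicalSpace.exists_countable_dense β
  let hull (q : β) : Set X := toMeasurable μ {x | q < f x}
  have hull_meas (q : β) : MeasurableSet (hull q) := measurableSet_toMeasurable _ _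
  let g (x : X) : β := ⨆ q ∈ D, if x ∈ hull q then q else ⊥
  have lt_g_iff {c : β} {x : X} : c < g x ↔ ∃ q ∈ D, x ∈ hull q ∧ c < q := by
    simp only [g, lt_iSup_iff, exists_prop]
    refine exists_congr fun q => and_congr_right fun _ => ?_
    split_ifs with hx <;> simp [hx]
  have f_le_g : f ≤ g := by
    refine fun x => le_of_forall_lt fun c hc => ?_
    obtain ⟨q, hqD, hcq, hqf⟩ := hD_dense.exists_between hc
    exact lt_g_iff.2 ⟨q, hqD, subset_toMeasurable _ _ hqf, hcq⟩
  refine ⟨g, .biSup _ hD_countable fun q _ =>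
    measurable_const.ite (hull_meas q) measurable_const, f_le_g, fun h hh A hA => ?_⟩
  refine le_antisymm ?_ (measure_mono fun x hx => ⟨hx.1, hx.2.trans_le (f_le_g x)⟩)
  let H : Set X := toMeasurable μ (A ∩ {x | h x < f x})
  let B (q : β) : Set X := A ∩ {x | h x < q} ∩ Hᶜ
  have hB (q : β) : MeasurableSet (B q) :=
    (hA.inter (measurableSet_lt hh measurable_const)).inter (measurableSet_toMeasurable _ _).compl
  have hull_inter_null (q : β) : μ (hull q ∩ B q) = 0 := by
    refine measure_toMeasurable_inter_eq_zero (hB q) (disjoint_left.2 fun x hqf hxB => ?_)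
    obtain ⟨⟨hxA, hhq⟩, hxH⟩ := hxB
    exact hxH (subset_toMeasurable _ _ ⟨hxA, lt_trans hhq hqf⟩)
  have covered : A ∩ {x | h x < g x} ⊆ H ∪ ⋃ q ∈ D, hull q ∩ B q := by
    rintro x ⟨hxA, hxg⟩
    obtain ⟨q, hqD, hxq, hhq⟩ := lt_g_iff.1 hxg
    by_cases hxH : x ∈ H
    · exact .inl hxH
    · exact .inr (mem_biUnion hqD ⟨hxq, ⟨hxA, hhq⟩, hxH⟩)
  calc μ (A ∩ {x | h x < g x})
      ≤ μ H + μ (⋃ q ∈ D, hull q ∩ B q) := (measure_mono covered).trans (measure_union_le _ _)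
    _ = μ (A ∩ {x | h x < f x}) := by
      rw [(measure_biUnion_null_iff hD_countable).2 fun q _ => hull_inter_null q, add_zero,
        measure_toMeasurable]

/-- The times `r ∈ [0, t]` whose interval `[r, r + L r)` still contains `t`. The condition
`t < r + L r` is written `t - r < L r`, with `t - r ≥ 0`, since `L` takes extended nonnegative
values. -/
def coveringTimes (L : ℝ → ℝ≥0∞) (t : ℝ) : Set ℝ :=
  Icc 0 t ∩ {r | ENNReal.ofReal (t - r) < L r}

/-- The free-boundary equation `L t = v t + |{s ∈ [0, t] : L (t - s) > s}|` for `t ≥ 0`, written in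
the variable `r = t - s` and for extended nonnegative functions. -/
def IsFreeBoundarySolution (v L : ℝ → ℝ≥0∞) : Prop :=
  ∀ t, 0 ≤ t → L t = v t + volume (coveringTimes L t)

section coveringTimes

variable {L L₁ L₂ : ℝ → ℝ≥0∞} {t T δ : ℝ}

lemma volume_coveringTimes_le (L : ℝ → ℝ≥0∞) (t : ℝ) :
    volume (coveringTimes L t) ≤ ENNReal.ofReal t :=
  (measure_mono inter_subset_left).trans_eq (by simp)

lemma volume_sub_lt_eq_volume_coveringTimes (ℓ : ℝ → ℝ) (t : ℝ) :
    volume {s : ℝ | s ∈ Icc 0 t ∧ ℓ (t - s) > s} =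
      volume (coveringTimes (fun r => ENNReal.ofReal (ℓ r)) t) := by
  refine Eq.trans ?_ ((Measure.measurePreserving_sub_left volume t).measure_preimage_equiv
    (f := MeasurableEquiv.subLeft t) _)
  congr 1
  ext s
  change (0 ≤ s ∧ s ≤ t) ∧ s < ℓ (t - s) ↔
    (0 ≤ t - s ∧ t - s ≤ t) ∧ ENNReal.ofReal (t - (t - s)) < ENNReal.ofReal (ℓ (t - s))
  rw [sub_nonneg, sub_le_self_iff, sub_sub_cancel, and_comm (a := s ≤ t)]
  exact and_congr_right fun hs => (ENNReal.ofReal_lt_ofReal_iff_of_nonneg hs.1).symm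

lemma exists_measurable_volume_coveringTimes_eq (L : ℝ → ℝ≥0∞) :
    ∃ g, Measurable g ∧ L ≤ g ∧
      ∀ t, volume (coveringTimes g t) = volume (coveringTimes L t) := by
  obtain ⟨g, hg, hLg, hlevel⟩ := exists_measurable_ge_forall_measure_inter_lt_eq volume L
  exact ⟨g, hg, hLg, fun t => hlevel _ (by fun_prop) _ measurableSet_Icc⟩

lemma measurableSet_mem_coveringTimes (hL : Measurable L) :
    MeasurableSet {p : ℝ × ℝ | p.2 ∈ coveringTimes L p.1} :=
  ((measurableSet_le measurable_const measurable_snd).inter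
    (measurableSet_le measurable_snd measurable_fst)).inter
    (measurableSet_lt (by fun_prop) (hL.comp measurable_snd))

lemma measurable_volume_coveringTimes (hL : Measurable L) :
    Measurable fun t => volume (coveringTimes L t) :=
  measurable_measure_prodMk_left (measurableSet_mem_coveringTimes hL)

lemma volume_mem_coveringTimes_inter_Icc {r : ℝ} (hr : r ∈ Icc 0 T)
    (hLr : L r ≤ ENNReal.ofReal (T - r)) :
    volume ({t | r ∈ coveringTimes L t} ∩ Icc 0 T) = L r := by
  have hL_top : L r ≠ ⊤ := ne_top_of_le_ne_top ENNReal.ofReal_ne_top hLr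
  have hLr' : (L r).toReal ≤ T - r := ENNReal.toReal_le_of_le_ofReal (sub_nonneg.2 hr.2) hLr
  have slice_eq : {t | r ∈ coveringTimes L t} ∩ Icc 0 T = Ico r (r + (L r).toReal) := by
    ext t
    simp only [coveringTimes, mem_inter_iff, mem_ofPred_eq, mem_Icc, mem_Ico]
    constructor
    · rintro ⟨⟨⟨-, hrt⟩, htr⟩, -⟩
      exact ⟨hrt, by linarith [(ENNReal.ofReal_lt_iff_lt_toReal (sub_nonneg.2 hrt) hL_top).1 htr]⟩
    · rintro ⟨hrt, htr⟩
      refine ⟨⟨⟨hr.1, hrt⟩, ?_⟩, hr.1.trans hrt, by linarith⟩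
      exact (ENNReal.ofReal_lt_iff_lt_toReal (sub_nonneg.2 hrt) hL_top).2 (by linarith)
  rw [slice_eq, Real.volume_Ico, add_sub_cancel_left, ENNReal.ofReal_toReal hL_top]

lemma lintegral_volume_coveringTimes (hL : Measurable L)
    (hLT : ∀ᵐ r ∂volume.restrict (Icc 0 T), L r ≤ ENNReal.ofReal (T - r)) :
    ∫⁻ t in Icc 0 T, volume (coveringTimes L t) = ∫⁻ r in Icc 0 T, L r := by
  let S : Set (ℝ × ℝ) := {p | p.2 ∈ coveringTimes L p.1}
  have hS : MeasurableSet S := measurableSet_mem_coveringTimes hL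
  let ν : Measure ℝ := volume.restrict (Icc 0 T)
  calc ∫⁻ t in Icc 0 T, volume (coveringTimes L t)
      = ∫⁻ t in Icc 0 T, ν (coveringTimes L t) := by
        refine setLIntegral_congr_fun measurableSet_Icc fun t ht => ?_
        exact (Measure.restrict_eq_self _
          (inter_subset_left.trans (Icc_subset_Icc_right ht.2))).symm
    _ = (ν.prod ν) S := (Measure.prod_apply hS).symm
    _ = ∫⁻ r in Icc 0 T, ν {t | r ∈ coveringTimes L t} := Measure.prod_apply_symm hS
    _ = ∫⁻ r in Icc 0 T, L r := by
        refine lintegral_congr_ae ?_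
        filter_upwards [hLT, ae_restrict_mem measurableSet_Icc] with r hLr hr
        rw [Measure.restrict_apply' measurableSet_Icc,
          volume_mem_coveringTimes_inter_Icc hr hLr]

lemma exists_forall_le_volume_coveringTimes (hT : volume (coveringTimes L T) ≠ 0) :
    ∃ δ > 0, ∀ t ∈ Ico T (T + δ), ENNReal.ofReal δ ≤ volume (coveringTimes L t) := by
  let ε (n : ℕ) : ℝ := 1 / ((n : ℝ) + 1)
  let C (n : ℕ) : Set ℝ := Icc 0 T ∩ {r | ENNReal.ofReal (T + ε n - r) < L r}
  have covered : coveringTimes L T ⊆ ⋃ n, C n := by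
    rintro r ⟨hr, hrL⟩
    have hlim : Filter.Tendsto (fun n => ENNReal.ofReal (T + ε n - r)) .atTop
        (nhds (ENNReal.ofReal (T - r))) := by
      simpa only [ε, add_zero] using ENNReal.tendsto_ofReal
        ((tendsto_one_div_add_atTop_nhds_zero_nat.const_add T).sub_const r)
    obtain ⟨n, hn⟩ := (hlim.eventually_lt_const hrL).exists
    exact mem_iUnion.2 ⟨n, hr, hn⟩
  obtain ⟨n, hn⟩ : ∃ n, volume (C n) ≠ 0 := by
    by_contra! hnull
    exact hT (measure_mono_null covered (measure_iUnion_null hnull))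
  have hC_top : volume (C n) ≠ ⊤ :=
    ne_top_of_le_ne_top (by simp) (measure_mono (inter_subset_left : C n ⊆ Icc 0 T))
  refine ⟨min (volume (C n)).toReal (ε n),
    lt_min (ENNReal.toReal_pos hn hC_top) Nat.one_div_pos_of_nat, fun t ht => ?_⟩
  have ht_lt : t < T + ε n := ht.2.trans_le (by gcongr; exact min_le_right _ _)
  calc ENNReal.ofReal (min (volume (C n)).toReal (ε n))
      ≤ volume (C n) := ENNReal.ofReal_le_of_le_toReal (min_le_left _ _)
    _ ≤ volume (coveringTimes L t) := by
      refine measure_mono fun r hr => ⟨⟨hr.1.1, hr.1.2.trans ht.1⟩, ?_⟩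
      exact (ENNReal.ofReal_le_ofReal (by linarith)).trans_lt hr.2

lemma coveringTimes_congr (hEq : EqOn L₁ L₂ (Ico 0 T))
    (h₁ : ∀ r ∈ Ico T (T + δ), ENNReal.ofReal δ ≤ L₁ r)
    (h₂ : ∀ r ∈ Ico T (T + δ), ENNReal.ofReal δ ≤ L₂ r) (ht : t ∈ Ico T (T + δ)) :
    coveringTimes L₁ t = coveringTimes L₂ t := by
  ext r
  refine and_congr_right fun hr => ?_
  simp only [mem_ofPred_eq]
  rcases lt_or_ge r T with hrT | hTr
  · rw [hEq ⟨hr.1, hrT⟩]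
  · have hrδ : r ∈ Ico T (T + δ) := ⟨hTr, hr.2.trans_lt ht.2⟩
    have hlt : ENNReal.ofReal (t - r) < ENNReal.ofReal δ := by
      have htr : t - r < δ := by linarith [ht.2]
      exact (ENNReal.ofReal_lt_ofReal_iff_of_nonneg (sub_nonneg.2 hr.2)).2 htr
    exact iff_of_true (hlt.trans_le (h₁ r hrδ)) (hlt.trans_le (h₂ r hrδ))

end coveringTimes

namespace IsFreeBoundarySolution

variable {v L L₁ L₂ : ℝ → ℝ≥0∞} {α T : ℝ}

lemma volume_coveringTimes_ne_zero (hL : IsFreeBoundarySolution v L)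
    (hv : ∫⁻ t in Icc 0 T, v t ≠ 0) :
    volume (coveringTimes L T) ≠ 0 := by
  intro hT
  obtain ⟨g, hg, hLg, hvol⟩ := exists_measurable_volume_coveringTimes_eq L
  have hgT : ∀ᵐ r ∂volume.restrict (Icc 0 T), g r ≤ ENNReal.ofReal (T - r) := by
    rw [ae_restrict_iff' measurableSet_Icc]
    filter_upwards [measure_eq_zero_iff_ae_notMem.1 ((hvol T).trans hT)] with r hr hrT
    exact not_lt.1 fun hlt => hr ⟨hrT, hlt⟩
  let inflow : ℝ≥0∞ := ∫⁻ t in Icc 0 T, volume (coveringTimes g t)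
  have inflow_ne_top : inflow ≠ ⊤ := by
    have hle : inflow ≤ ∫⁻ _ in Icc 0 T, ENNReal.ofReal T :=
      setLIntegral_mono measurable_const fun t ht =>
        (volume_coveringTimes_le g t).trans (ENNReal.ofReal_le_ofReal ht.2)
    exact ne_top_of_le_ne_top (by simp [ENNReal.mul_eq_top]) hle
  have add_le : inflow + ∫⁻ t in Icc 0 T, v t ≤ inflow :=
    calc inflow + ∫⁻ t in Icc 0 T, v t
        = ∫⁻ t in Icc 0 T, (volume (coveringTimes g t) + v t) :=
          (lintegral_add_left (measurable_volume_coveringTimes hg) v).symm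
      _ ≤ ∫⁻ t in Icc 0 T, g t := by
          refine setLIntegral_mono hg fun t ht => ?_
          rw [hvol, add_comm, ← hL t ht.1]
          exact hLg t
      _ = inflow := (lintegral_volume_coveringTimes hg hgT).symm
  exact add_le.not_gt (ENNReal.lt_add_right inflow_ne_top hv)

lemma exists_forall_le (hL : IsFreeBoundarySolution v L) (hα : 0 < α)
    (hv : ∀ t ∈ Ico 0 α, ENNReal.ofReal α ≤ v t) (hT : 0 ≤ T) :
    ∃ δ > 0, ∀ t ∈ Ico T (T + δ), ENNReal.ofReal δ ≤ L t := by
  rcases lt_or_ge T α with hTα | hαT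
  · refine ⟨α - T, sub_pos.2 hTα, fun t ht => ?_⟩
    have ht0 : 0 ≤ t := hT.trans ht.1
    calc ENNReal.ofReal (α - T) ≤ ENNReal.ofReal α := ENNReal.ofReal_le_ofReal (by linarith)
      _ ≤ v t := hv t ⟨ht0, by linarith [ht.2]⟩
      _ ≤ L t := hL t ht0 ▸ le_self_add
  · have hv_int : ∫⁻ t in Icc 0 T, v t ≠ 0 := by
      refine ne_of_gt ?_
      calc 0 < ∫⁻ _ in Ico 0 α, ENNReal.ofReal α := by simp [hα]
        _ ≤ ∫⁻ t in Ico 0 α, v t := setLIntegral_mono' measurableSet_Ico hv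
        _ ≤ ∫⁻ t in Icc 0 T, v t :=
          lintegral_mono_set (Ico_subset_Icc_self.trans (Icc_subset_Icc_right hαT))
    obtain ⟨δ, hδ, hle⟩ :=
      exists_forall_le_volume_coveringTimes (hL.volume_coveringTimes_ne_zero hv_int)
    exact ⟨δ, hδ, fun t ht => (hle t ht).trans (hL t (hT.trans ht.1) ▸ le_add_self)⟩

lemma exists_eqOn_Ico (hL₁ : IsFreeBoundarySolution v L₁) (hL₂ : IsFreeBoundarySolution v L₂)
    (hα : 0 < α) (hv : ∀ t ∈ Ico 0 α, ENNReal.ofReal α ≤ v t) (hT : 0 ≤ T)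
    (hEq : EqOn L₁ L₂ (Ico 0 T)) :
    ∃ δ > 0, EqOn L₁ L₂ (Ico T (T + δ)) := by
  obtain ⟨δ₁, hδ₁, h₁⟩ := hL₁.exists_forall_le hα hv hT
  obtain ⟨δ₂, hδ₂, h₂⟩ := hL₂.exists_forall_le hα hv hT
  refine ⟨min δ₁ δ₂, lt_min hδ₁ hδ₂, fun t ht => ?_⟩
  have hcov : coveringTimes L₁ t = coveringTimes L₂ t := by
    refine coveringTimes_congr hEq (fun r hr => ?_) (fun r hr => ?_) ht
    · exact (ENNReal.ofReal_le_ofReal (min_le_left _ _)).trans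
        (h₁ r ⟨hr.1, hr.2.trans_le (by gcongr; exact min_le_left _ _)⟩)
    · exact (ENNReal.ofReal_le_ofReal (min_le_right _ _)).trans
        (h₂ r ⟨hr.1, hr.2.trans_le (by gcongr; exact min_le_right _ _)⟩)
  have ht0 : 0 ≤ t := hT.trans ht.1
  rw [hL₁ t ht0, hL₂ t ht0, hcov]

theorem eqOn_Ici (hL₁ : IsFreeBoundarySolution v L₁) (hL₂ : IsFreeBoundarySolution v L₂)
    (hα : 0 < α) (hv : ∀ t ∈ Ico 0 α, ENNReal.ofReal α ≤ v t) : EqOn L₁ L₂ (Ici 0) := by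
  by_contra hne
  let B : Set ℝ := {t | 0 ≤ t ∧ L₁ t ≠ L₂ t}
  have hB_nonempty : B.Nonempty := by
    obtain ⟨t, ht, hLt⟩ : ∃ t ∈ Ici (0 : ℝ), L₁ t ≠ L₂ t := by
      simpa only [EqOn, not_forall, exists_prop] using hne
    exact ⟨t, ht, hLt⟩
  have hB_bddBelow : BddBelow B := ⟨0, fun _ ht => ht.1⟩
  have hEq : EqOn L₁ L₂ (Ico 0 (sInf B)) := fun t ht =>
    of_not_not fun hLt => notMem_of_lt_csInf ht.2 hB_bddBelow ⟨ht.1, hLt⟩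
  obtain ⟨δ, hδ, hEqδ⟩ :=
    hL₁.exists_eqOn_Ico hL₂ hα hv (le_csInf hB_nonempty fun _ ht => ht.1) hEq
  obtain ⟨t, htB, ht⟩ := exists_lt_of_csInf_lt hB_nonempty (lt_add_of_pos_right (sInf B) hδ)
  exact htB.2 (hEqδ ⟨csInf_le hB_bddBelow htB, ht⟩)

lemma ofReal {u0 ℓ : ℝ → ℝ} (hu0 : ∀ t ≥ (0 : ℝ), 0 ≤ u0 t)
    (hℓ : ∀ t ≥ (0 : ℝ),
      ℓ t = u0 t + (volume {s : ℝ | s ∈ Icc 0 t ∧ ℓ (t - s) > s}).toReal) :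
    IsFreeBoundarySolution (fun t => ENNReal.ofReal (u0 t)) (fun t => ENNReal.ofReal (ℓ t)) := by
  intro t ht
  beta_reduce
  rw [hℓ t ht, volume_sub_lt_eq_volume_coveringTimes,
    ENNReal.ofReal_add (hu0 t ht) ENNReal.toReal_nonneg, ENNReal.ofReal_toReal]
  exact ne_top_of_le_ne_top ENNReal.ofReal_ne_top (volume_coveringTimes_le _ t)

end IsFreeBoundarySolution

theorem mancala_freeBoundary_uniqueness_general
    (u0 : ℝ → ℝ)
    (hu0_nonneg : ∀ t ≥ (0 : ℝ), 0 ≤ u0 t)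
    (α : ℝ) (hα : 0 < α)
    (hu0_pos : ∀ t ∈ Ico (0 : ℝ) α, α ≤ u0 t)
    (ℓ₁ ℓ₂ : ℝ → ℝ)
    (hℓ₁ : ∀ t ≥ (0 : ℝ),
      ℓ₁ t = u0 t + (volume {s : ℝ | s ∈ Icc 0 t ∧ ℓ₁ (t - s) > s}).toReal)
    (hℓ₂ : ∀ t ≥ (0 : ℝ),
      ℓ₂ t = u0 t + (volume {s : ℝ | s ∈ Icc 0 t ∧ ℓ₂ (t - s) > s}).toReal) :
    ∀ t ≥ (0 : ℝ), ℓ₁ t = ℓ₂ t := by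
  intro t ht
  have hEq : ENNReal.ofReal (ℓ₁ t) = ENNReal.ofReal (ℓ₂ t) :=
    (IsFreeBoundarySolution.ofReal hu0_nonneg hℓ₁).eqOn_Ici (.ofReal hu0_nonneg hℓ₂) hα
      (fun s hs => ENNReal.ofReal_le_ofReal (hu0_pos s hs)) ht
  have hℓ₁_nonneg : 0 ≤ ℓ₁ t := hℓ₁ t ht ▸ add_nonneg (hu0_nonneg t ht) ENNReal.toReal_nonneg
  have hℓ₂_nonneg : 0 ≤ ℓ₂ t := hℓ₂ t ht ▸ add_nonneg (hu0_nonneg t ht) ENNReal.toReal_nonneg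
  exact (ENNReal.ofReal_eq_ofReal_iff hℓ₁_nonneg hℓ₂_nonneg).1 hEq

/-- Uniqueness of locally-BV solutions of the nonlocal free-boundary
equation, provided `u0 ≥ α > 0` on `[0,α)`. -/
theorem mancala_freeBoundary_uniqueness
    (u0 : ℝ → ℝ)
    (hu0_nonneg : ∀ t ≥ (0 : ℝ), 0 ≤ u0 t)
    (hu0_rc : ∀ t ≥ (0 : ℝ), ContinuousWithinAt u0 (Set.Ici t) t)
    (hu0_bv : ∀ a > (0 : ℝ), BoundedVariationOn u0 (Set.Icc 0 a))
    (α : ℝ) (hα : 0 < α)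
    (hu0_pos : ∀ t ∈ Set.Ico (0 : ℝ) α, α ≤ u0 t)
    (ℓ₁ ℓ₂ : ℝ → ℝ)
    (hℓ₁_bv : ∀ a > (0 : ℝ), BoundedVariationOn ℓ₁ (Set.Icc 0 a))
    (hℓ₂_bv : ∀ a > (0 : ℝ), BoundedVariationOn ℓ₂ (Set.Icc 0 a))
    (hℓ₁ : ∀ t ≥ (0 : ℝ),
      ℓ₁ t = u0 t + (volume {s : ℝ | s ∈ Set.Icc 0 t ∧ ℓ₁ (t - s) > s}).toReal)
    (hℓ₂ : ∀ t ≥ (0 : ℝ),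
      ℓ₂ t = u0 t + (volume {s : ℝ | s ∈ Set.Icc 0 t ∧ ℓ₂ (t - s) > s}).toReal) :
    ∀ t ≥ (0 : ℝ), ℓ₁ t = ℓ₂ t :=
  mancala_freeBoundary_uniqueness_general u0 hu0_nonneg α hα hu0_pos ℓ₁ ℓ₂ hℓ₁ hℓ₂
end

section
/- Let u0 : [0,∞) → ℝ be nonnegative, right-continuous, of locally bounded variation, and suppose there exists α > 0 with u0(t) ≥ α for all t ∈ [0,α). If ℓ : [0,∞) → ℝ satisfies the nonlocal free-boundary equation ℓ(t) = u0(t) + |{ s ∈ [0,t] : ℓ(t−s) > s }| for every t ∈ [0,∞), then ℓ(t) ≥ α for all t ∈ [0,∞). -/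
open MeasureTheory Set

/-!
A lower bound `α` on `[0, T)`, where `T ≥ α`, extends to `[0, T + α)` in two passes. For
`t ∈ [T, T + α)` the delays `s ∈ (t - T, α)` look back into `[0, T)`, where `ℓ ≥ α > s`, so the
measure term gives the crude bound `ℓ t ≥ T + α - t`. This is already enough to have
`ℓ (t - s) > s` for every `s ∈ (0, α)`, whether or not `t - s` lies below `T`, and the measure
term is then at least `α`.
-/

/-- The set of delays `s ∈ [0, t]` with `ℓ (t - s) > s`, whose length is the nonlocal term of the
free-boundary equation. -/
def activeDelays (ℓ : ℝ → ℝ) (t : ℝ) : Set ℝ :=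
  {s | s ∈ Icc 0 t ∧ ℓ (t - s) > s}

/-- Supersolutions of the free-boundary equation with zero datum. Solutions with a nonnegative
datum are supersolutions in this sense, and the datum enters the lower bound only through the
values of `ℓ` on `[0, α)`. -/
def IsFreeBoundarySupersolution (ℓ : ℝ → ℝ) : Prop :=
  ∀ t ≥ 0, volume.real (activeDelays ℓ t) ≤ ℓ t

theorem volume_activeDelays_ne_top (ℓ : ℝ → ℝ) (t : ℝ) : volume (activeDelays ℓ t) ≠ ⊤ :=
  measure_ne_top_of_subset (fun _ hs ↦ hs.1) measure_Icc_lt_top.ne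

namespace IsFreeBoundarySupersolution

variable {ℓ : ℝ → ℝ} {α t T : ℝ}

theorem sub_le_of_Ioo_subset {a b : ℝ} (hℓ : IsFreeBoundarySupersolution ℓ) (ht : 0 ≤ t)
    (hab : Ioo a b ⊆ activeDelays ℓ t) : b - a ≤ ℓ t :=
  calc
    b - a ≤ volume.real (Ioo a b) := Real.volume_real_Ioo.symm ▸ le_max_left _ _
    _ ≤ volume.real (activeDelays ℓ t) := measureReal_mono hab (volume_activeDelays_ne_top ℓ t)
    _ ≤ ℓ t := hℓ t ht

theorem add_sub_le (hℓ : IsFreeBoundarySupersolution ℓ) (hαT : α ≤ T)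
    (hT : ∀ s ∈ Ico 0 T, α ≤ ℓ s) (ht : 0 ≤ t) (hTt : T ≤ t) : T + α - t ≤ ℓ t := by
  have active : Ioo (t - T) α ⊆ activeDelays ℓ t := by
    rintro s ⟨hs, hsα⟩
    have lower : α ≤ ℓ (t - s) := hT (t - s) ⟨by linarith, by linarith⟩
    exact ⟨⟨by linarith, by linarith⟩, hsα.trans_le lower⟩
  linarith [hℓ.sub_le_of_Ioo_subset ht active]

theorem le_of_mem_Ico_add (hℓ : IsFreeBoundarySupersolution ℓ) (hαT : α ≤ T)
    (hT : ∀ s ∈ Ico 0 T, α ≤ ℓ s) (ht : t ∈ Ico 0 (T + α)) : α ≤ ℓ t := by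
  obtain ⟨ht₀, htT⟩ := ht
  rcases lt_or_ge t T with hlt | hge
  · exact hT t ⟨ht₀, hlt⟩
  have active : Ioo 0 α ⊆ activeDelays ℓ t := by
    rintro s ⟨hs, hsα⟩
    have hst : 0 ≤ t - s := by linarith
    refine ⟨⟨hs.le, by linarith⟩, ?_⟩
    rcases lt_or_ge (t - s) T with hlt | hge
    · exact hsα.trans_le (hT (t - s) ⟨hst, hlt⟩)
    · calc
        s < T + α - (t - s) := by linarith
        _ ≤ ℓ (t - s) := hℓ.add_sub_le hαT hT hst hge
  simpa only [sub_zero] using hℓ.sub_le_of_Ioo_subset ht₀ active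

theorem le_of_mem_Ico_add_nsmul (hℓ : IsFreeBoundarySupersolution ℓ) (hα : 0 ≤ α)
    (hinit : ∀ s ∈ Ico 0 α, α ≤ ℓ s) (n : ℕ) : ∀ t ∈ Ico 0 (α + n • α), α ≤ ℓ t := by
  induction n with
  | zero => simpa only [zero_nsmul, add_zero] using hinit
  | succ n ih =>
    intro t ht
    rw [succ_nsmul, ← add_assoc] at ht
    exact hℓ.le_of_mem_Ico_add (le_add_of_nonneg_right (nsmul_nonneg hα n)) ih ht

end IsFreeBoundarySupersolution

theorem mancala_freeBoundary_lowerBound_general {ℓ : ℝ → ℝ} {α : ℝ}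
    (hℓ : IsFreeBoundarySupersolution ℓ) (hα : 0 < α) (hinit : ∀ t ∈ Ico 0 α, α ≤ ℓ t) :
    ∀ t ≥ 0, α ≤ ℓ t := by
  intro t ht
  obtain ⟨n, hn⟩ : ∃ n : ℕ, t ≤ n • α := Archimedean.arch t hα
  exact hℓ.le_of_mem_Ico_add_nsmul hα.le hinit n t ⟨ht, hn.trans_lt (lt_add_of_pos_left _ hα)⟩

/-- Lower bound: any solution of the nonlocal free-boundary equation
with datum `u0 ≥ α > 0` on `[0,α)` satisfies `ℓ(t) ≥ α` for all `t ≥ 0`. -/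
theorem mancala_freeBoundary_lowerBound
    (u0 : ℝ → ℝ)
    (hu0_nonneg : ∀ t ≥ (0 : ℝ), 0 ≤ u0 t)
    (hu0_rc : ∀ t ≥ (0 : ℝ), ContinuousWithinAt u0 (Set.Ici t) t)
    (hu0_bv : ∀ a > (0 : ℝ), BoundedVariationOn u0 (Set.Icc 0 a))
    (α : ℝ) (hα : 0 < α)
    (hu0_pos : ∀ t ∈ Set.Ico (0 : ℝ) α, α ≤ u0 t)
    (ℓ : ℝ → ℝ)
    (hℓ : ∀ t ≥ (0 : ℝ),
      ℓ t = u0 t + (volume {s : ℝ | s ∈ Set.Icc 0 t ∧ ℓ (t - s) > s}).toReal) :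
    ∀ t ≥ (0 : ℝ), α ≤ ℓ t := by
  have hsuper : IsFreeBoundarySupersolution ℓ := fun t ht ↦
    (le_add_of_nonneg_left (hu0_nonneg t ht)).trans_eq (hℓ t ht).symm
  refine mancala_freeBoundary_lowerBound_general hsuper hα fun t ht ↦ ?_
  exact (hu0_pos t ht).trans <|
    (le_add_of_nonneg_right ENNReal.toReal_nonneg).trans_eq (hℓ t ht.1).symm
end

section
/- Let u0 : [0,∞) → ℝ be nonnegative, right-continuous, of locally bounded variation, and suppose there exists α > 0 with u0(t) ≥ α for all t ∈ [0,α). If ℓ : [0,∞) → ℝ satisfies the nonlocal free-boundary equation ℓ(t) = u0(t) + |{ s ∈ [0,t] : ℓ(t−s) > s }| for every t ∈ [0,∞), then ℓ satisfies the one-sided Lipschitz condition ℓ(t+τ) − ℓ(t) ≤ u0(t+τ) − u0(t) + τ for every t > 0 and every τ ≥ 0. -/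
open MeasureTheory Set

/-!
A delay `s ≥ τ` counted at time `t + τ` and the delay `s - τ` at time `t` refer to the same value
`ℓ (t + τ - s) = ℓ (t - (s - τ))`, and the strict inequality required of that value is weaker for
`s - τ` than for `s`. Hence, up to translation by `τ`, only the delays in `[0, τ)` are new at time
`t + τ`, and they contribute at most `τ` to the measure.
-/

/-- The set of delays `s ∈ [0, t]` whose Lebesgue measure is the nonlocal term at time `t` of the
free-boundary equation for `ℓ`. For arbitrary `ℓ` it may fail to be measurable; `volume` is then the
outer measure. -/
def delaySet (ℓ : ℝ → ℝ) (t : ℝ) : Set ℝ :=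
  {s | s ∈ Icc 0 t ∧ ℓ (t - s) > s}

namespace delaySet

variable (ℓ : ℝ → ℝ) (t : ℝ) {τ : ℝ}

theorem subset_Icc : delaySet ℓ t ⊆ Icc 0 t :=
  fun _ hs ↦ hs.1

theorem volume_ne_top : volume (delaySet ℓ t) ≠ ⊤ :=
  measure_ne_top_of_subset (subset_Icc ℓ t) measure_Icc_lt_top.ne

theorem add_subset (hτ : 0 ≤ τ) :
    delaySet ℓ (t + τ) ⊆ (· - τ) ⁻¹' delaySet ℓ t ∪ Ico 0 τ := by
  rintro s ⟨⟨hs_nonneg, hs_le⟩, hs_lt⟩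
  rcases lt_or_ge s τ with hsτ | hτs
  · exact Or.inr ⟨hs_nonneg, hsτ⟩
  · have same_time : t - (s - τ) = t + τ - s := by ring
    refine Or.inl ⟨⟨sub_nonneg.2 hτs, sub_le_iff_le_add.2 hs_le⟩, ?_⟩
    rw [same_time]
    exact (sub_le_self s hτ).trans_lt hs_lt

theorem volume_add_le (hτ : 0 ≤ τ) :
    volume (delaySet ℓ (t + τ)) ≤ volume (delaySet ℓ t) + ENNReal.ofReal τ :=
  calc
    volume (delaySet ℓ (t + τ))
      ≤ volume ((· - τ) ⁻¹' delaySet ℓ t ∪ Ico 0 τ) := measure_mono (add_subset ℓ t hτ)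
    _ ≤ volume ((· - τ) ⁻¹' delaySet ℓ t) + volume (Ico 0 τ) := measure_union_le _ _
    _ = volume (delaySet ℓ t) + ENNReal.ofReal τ := by
      simp only [sub_eq_add_neg, measure_preimage_add_right, Real.volume_Ico, neg_zero, add_zero]

theorem volume_real_add_le (hτ : 0 ≤ τ) :
    volume.real (delaySet ℓ (t + τ)) ≤ volume.real (delaySet ℓ t) + τ := by
  simpa only [measureReal_def, ENNReal.toReal_ofReal hτ] using
    ENNReal.toReal_le_add (volume_add_le ℓ t hτ) (volume_ne_top ℓ t) ENNReal.ofReal_ne_top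

end delaySet

theorem mancala_freeBoundary_oneSided_Lipschitz_general {u0 ℓ : ℝ → ℝ}
    (hℓ : ∀ t ≥ 0, ℓ t = u0 t + volume.real (delaySet ℓ t)) {t τ : ℝ} (ht : 0 ≤ t) (hτ : 0 ≤ τ) :
    ℓ (t + τ) - ℓ t ≤ u0 (t + τ) - u0 t + τ := by
  have eq_later := hℓ (t + τ) (add_nonneg ht hτ)
  have eq_now := hℓ t ht
  linarith [delaySet.volume_real_add_le ℓ t hτ]

/-- One-sided Lipschitz condition
`ℓ(t+τ) − ℓ(t) ≤ u0(t+τ) − u0(t) + τ` for `t > 0`, `τ ≥ 0`, for any solution of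
the nonlocal free-boundary equation. -/
theorem mancala_freeBoundary_oneSided_Lipschitz
    (u0 : ℝ → ℝ)
    (hu0_nonneg : ∀ t ≥ (0 : ℝ), 0 ≤ u0 t)
    (hu0_rc : ∀ t ≥ (0 : ℝ), ContinuousWithinAt u0 (Set.Ici t) t)
    (hu0_bv : ∀ a > (0 : ℝ), BoundedVariationOn u0 (Set.Icc 0 a))
    (α : ℝ) (hα : 0 < α)
    (hu0_pos : ∀ t ∈ Set.Ico (0 : ℝ) α, α ≤ u0 t)
    (ℓ : ℝ → ℝ)
    (hℓ : ∀ t ≥ (0 : ℝ),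
      ℓ t = u0 t + (volume {s : ℝ | s ∈ Set.Icc 0 t ∧ ℓ (t - s) > s}).toReal) :
    ∀ t > (0 : ℝ), ∀ τ ≥ (0 : ℝ),
      ℓ (t + τ) - ℓ t ≤ u0 (t + τ) - u0 t + τ :=
  fun _ ht _ hτ ↦ mancala_freeBoundary_oneSided_Lipschitz_general hℓ ht.le hτ
end

section
/- Let u0 : [0,∞) → ℝ be nonnegative, bounded, right-continuous, and of locally bounded variation (no positivity at the origin is assumed). Then there exists a function ℓ : [0,∞) → ℝ satisfying ℓ(t) = u0(t) + |{ s ∈ [0,t] : ℓ(t−s) ≥ s }| for every t ∈ [0,∞) (the nonlocal equation with non-strict inequality), and satisfying the one-sided Lipschitz condition ℓ(t+τ) − ℓ(t) ≤ u0(t+τ) − u0(t) + τ for every t > 0 and τ ≥ 0. -/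
open MeasureTheory Set

/-!
A solution is a fixed point of `ℓ ↦ u0 + |{s ∈ [0, ·] : ℓ (· - s) ≥ s}|`. This operator is monotone
in `ℓ` and maps the order interval `[u0, u0 + |[0, ·]|]` into itself, so the Knaster–Tarski argument
provides a fixed point. The one-sided Lipschitz condition holds for every solution: a point `s ≥ τ`
of the set at time `t + τ` gives the point `s - τ` of the set at time `t`, because
`t - (s - τ) = t + τ - s`.
-/

theorem exists_isFixedPt_of_monotoneOn_Icc {α : Type*} [ConditionallyCompleteLattice α]
    {f : α → α} {a b : α} (hab : a ≤ b) (hf : MonotoneOn f (Icc a b))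
    (hmaps : MapsTo f (Icc a b) (Icc a b)) :
    ∃ x ∈ Icc a b, Function.IsFixedPt f x := by
  have : Fact (a ≤ b) := ⟨hab⟩
  let F : Icc a b →o Icc a b := ⟨hmaps.restrict, fun x y hxy => hf x.2 y.2 hxy⟩
  exact ⟨F.gfp, F.gfp.2, congrArg Subtype.val F.map_gfp⟩

/-- The set `{s ∈ [0, t] : ℓ (t - s) ≥ s}` whose measure is the nonlocal term of the equation. -/
def reachSet (ℓ : ℝ → ℝ) (t : ℝ) : Set ℝ :=
  {s | s ∈ Icc 0 t ∧ ℓ (t - s) ≥ s}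

theorem reachSet_subset_Icc (ℓ : ℝ → ℝ) (t : ℝ) : reachSet ℓ t ⊆ Icc 0 t :=
  fun _ hs => hs.1

theorem reachSet_mono {ℓ ℓ' : ℝ → ℝ} (h : ℓ ≤ ℓ') (t : ℝ) : reachSet ℓ t ⊆ reachSet ℓ' t :=
  fun s hs => ⟨hs.1, hs.2.trans (h (t - s))⟩

theorem reachSet_add_subset (ℓ : ℝ → ℝ) (t : ℝ) {τ : ℝ} (hτ : 0 ≤ τ) :
    reachSet ℓ (t + τ) ⊆ Ico 0 τ ∪ (fun s => s - τ) ⁻¹' reachSet ℓ t := by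
  rintro s ⟨⟨hs_nonneg, hs_le⟩, hs_reach⟩
  rcases lt_or_ge s τ with hsτ | hτs
  · exact Or.inl ⟨hs_nonneg, hsτ⟩
  · refine Or.inr ⟨⟨sub_nonneg.2 hτs, sub_le_iff_le_add.2 hs_le⟩, ?_⟩
    rw [sub_sub_eq_add_sub]
    exact (sub_le_self s hτ).trans hs_reach

section FiniteOnCompacts

variable (μ : Measure ℝ) [IsFiniteMeasureOnCompacts μ]

theorem measure_reachSet_ne_top (ℓ : ℝ → ℝ) (t : ℝ) : μ (reachSet ℓ t) ≠ ⊤ :=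
  measure_ne_top_of_subset (reachSet_subset_Icc ℓ t) isCompact_Icc.measure_ne_top

theorem exists_eq_add_measureReal_reachSet (u : ℝ → ℝ) :
    ∃ ℓ : ℝ → ℝ, ∀ t, ℓ t = u t + μ.real (reachSet ℓ t) := by
  let sow : (ℝ → ℝ) → ℝ → ℝ := fun ℓ t => u t + μ.real (reachSet ℓ t)
  have sow_mono : Monotone sow := fun ℓ ℓ' h t =>
    add_le_add_right (measureReal_mono (reachSet_mono h t) (measure_reachSet_ne_top μ ℓ' t)) _
  have le_sow (ℓ : ℝ → ℝ) : u ≤ sow ℓ := fun t => le_add_of_nonneg_right measureReal_nonneg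
  have sow_le (ℓ : ℝ → ℝ) : sow ℓ ≤ fun t => u t + μ.real (Icc 0 t) := fun t =>
    add_le_add_right
      (measureReal_mono (reachSet_subset_Icc ℓ t) isCompact_Icc.measure_ne_top) _
  obtain ⟨ℓ, -, hℓ⟩ := exists_isFixedPt_of_monotoneOn_Icc ((le_sow u).trans (sow_le u))
    (sow_mono.monotoneOn _) (fun ℓ _ => ⟨le_sow ℓ, sow_le ℓ⟩)
  exact ⟨ℓ, fun t => (congrFun hℓ t).symm⟩

end FiniteOnCompacts

theorem volumeReal_reachSet_add_le (ℓ : ℝ → ℝ) (t : ℝ) {τ : ℝ} (hτ : 0 ≤ τ) :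
    volume.real (reachSet ℓ (t + τ)) ≤ volume.real (reachSet ℓ t) + τ := by
  have volume_shift : volume ((fun s => s - τ) ⁻¹' reachSet ℓ t) = volume (reachSet ℓ t) := by
    simp only [sub_eq_add_neg, measure_preimage_add_right]
  calc volume.real (reachSet ℓ (t + τ))
      ≤ volume.real (Ico 0 τ ∪ (fun s => s - τ) ⁻¹' reachSet ℓ t) :=
        measureReal_mono (reachSet_add_subset ℓ t hτ)
          (measure_union_ne_top measure_Ico_lt_top.ne
            (volume_shift ▸ measure_reachSet_ne_top volume ℓ t))
    _ ≤ volume.real (Ico 0 τ) + volume.real ((fun s => s - τ) ⁻¹' reachSet ℓ t) :=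
        measureReal_union_le _ _
    _ = τ + volume.real (reachSet ℓ t) :=
        congrArg₂ (· + ·) (by rw [Real.volume_real_Ico_of_le hτ, sub_zero])
          (congrArg ENNReal.toReal volume_shift)
    _ = volume.real (reachSet ℓ t) + τ := add_comm _ _

/- `volume` of a non-measurable set is its Lebesgue outer measure. For measurable `u0` the sets
below are measurable: by the second conclusion `ℓ - u0 - id` is antitone, hence `ℓ` is
measurable. -/
theorem mancala_freeBoundary_existence_degenerate_general (u0 : ℝ → ℝ) :
    ∃ ℓ : ℝ → ℝ,
      (∀ t, ℓ t = u0 t + volume.real {s : ℝ | s ∈ Icc 0 t ∧ ℓ (t - s) ≥ s}) ∧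
      (∀ t, ∀ τ ≥ (0 : ℝ), ℓ (t + τ) - ℓ t ≤ u0 (t + τ) - u0 t + τ) := by
  obtain ⟨ℓ, hℓ⟩ := exists_eq_add_measureReal_reachSet volume u0
  refine ⟨ℓ, hℓ, fun t τ hτ => ?_⟩
  rw [hℓ (t + τ), hℓ t]
  linarith [volumeReal_reachSet_add_le ℓ t hτ]

/-- For a nonnegative, bounded, right-continuous, locally BV datum
(no positivity at the origin assumed), there exists `ℓ` satisfying the nonlocal
equation with non-strict inequality
`ℓ(t) = u0(t) + |{ s ∈ [0,t] : ℓ(t−s) ≥ s }|` and the one-sided Lipschitz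
condition. -/
theorem mancala_freeBoundary_existence_degenerate
    (u0 : ℝ → ℝ)
    (hu0_nonneg : ∀ t ≥ (0 : ℝ), 0 ≤ u0 t)
    (hu0_bdd : ∃ C : ℝ, ∀ t ≥ (0 : ℝ), u0 t ≤ C)
    (hu0_rc : ∀ t ≥ (0 : ℝ), ContinuousWithinAt u0 (Set.Ici t) t)
    (hu0_bv : ∀ a > (0 : ℝ), BoundedVariationOn u0 (Set.Icc 0 a)) :
    ∃ ℓ : ℝ → ℝ,
      (∀ t ≥ (0 : ℝ),
        ℓ t = u0 t + (volume {s : ℝ | s ∈ Set.Icc 0 t ∧ ℓ (t - s) ≥ s}).toReal) ∧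
      (∀ t > (0 : ℝ), ∀ τ ≥ (0 : ℝ),
        ℓ (t + τ) - ℓ t ≤ u0 (t + τ) - u0 t + τ) := by
  obtain ⟨ℓ, h_eq, h_lip⟩ := mancala_freeBoundary_existence_degenerate_general u0
  exact ⟨ℓ, fun t _ => h_eq t, fun t _ => h_lip t⟩
end

section
/- Let κ > 0, a > 0, and let γ = (−κ + √(κ² + 4κ))/2 be the positive root of γ² + κγ − κ = 0. Let u0 : [0,∞) → ℝ be nonnegative and let ℓ : [0,∞) → ℝ be nonnegative and satisfy the nonlocal free-boundary equation ℓ(t) = u0(t) + |{ s ∈ [0,t] : ℓ(t−s) > s }| for every t ∈ [0,∞). If u0(t) ≤ κ·t for all t ∈ [0,a], then ℓ(t) ≤ κ·t + γ·t for all t ∈ [0,a]. -/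
open MeasureTheory Set

/-- Subsolutions on `[0, a]` of the free-boundary equation with datum `u0`. For
nonmeasurable `ℓ` the nonlocal term is a Lebesgue outer measure. -/
def IsFreeBoundarySubsolution (u0 ℓ : ℝ → ℝ) (a : ℝ) : Prop :=
  ∀ t ∈ Icc 0 a, ℓ t ≤ u0 t + volume.real (activeDelays ℓ t)

/-- The nonnegative slopes of lines through the origin lying above `ℓ` on `[0, a]`. -/
def slopeBounds (ℓ : ℝ → ℝ) (a : ℝ) : Set ℝ :=
  {c | 0 ≤ c ∧ ∀ t ∈ Icc 0 a, ℓ t ≤ c * t}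

lemma volume_real_le_of_subset_Icc {s : Set ℝ} {x y : ℝ} (hxy : x ≤ y) (hs : s ⊆ Icc x y) :
    volume.real s ≤ y - x := by
  calc volume.real s ≤ volume.real (Icc x y) := measureReal_mono hs measure_Icc_lt_top.ne
    _ = y - x := Real.volume_real_Icc_of_le hxy

section ActiveDelays

variable {ℓ : ℝ → ℝ} {t c : ℝ}

lemma activeDelays_subset_Icc : activeDelays ℓ t ⊆ Icc 0 t :=
  fun _ hs ↦ hs.1

lemma activeDelays_subset_Icc_of_le_mul (hc : -1 < c) (hℓ : ∀ r ∈ Icc 0 t, ℓ r ≤ c * r) :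
    activeDelays ℓ t ⊆ Icc 0 (c / (1 + c) * t) := by
  rintro s ⟨⟨hs0, hst⟩, hactive⟩
  have hlt : s < c * (t - s) := hactive.trans_le (hℓ (t - s) ⟨by linarith, by linarith⟩)
  refine ⟨hs0, ?_⟩
  rw [div_mul_eq_mul_div, le_div_iff₀ (by linarith)]
  linarith

lemma volume_real_activeDelays_le (ht : 0 ≤ t) : volume.real (activeDelays ℓ t) ≤ t := by
  simpa using volume_real_le_of_subset_Icc ht activeDelays_subset_Icc

lemma volume_real_activeDelays_le_of_le_mul (hc : 0 ≤ c) (ht : 0 ≤ t)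
    (hℓ : ∀ r ∈ Icc 0 t, ℓ r ≤ c * r) :
    volume.real (activeDelays ℓ t) ≤ c / (1 + c) * t := by
  have hbound : 0 ≤ c / (1 + c) * t := by positivity
  simpa using volume_real_le_of_subset_Icc hbound
    (activeDelays_subset_Icc_of_le_mul (by linarith) hℓ)

end ActiveDelays

section SlopeBounds

variable {ℓ : ℝ → ℝ} {a : ℝ}

lemma isClosed_slopeBounds : IsClosed (slopeBounds ℓ a) := by
  have hinter : slopeBounds ℓ a = Ici 0 ∩ ⋂ t ∈ Icc 0 a, {c | ℓ t ≤ c * t} := by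
    ext c
    simp [slopeBounds]
  rw [hinter]
  exact isClosed_Ici.inter <| isClosed_biInter fun t _ ↦
    isClosed_le continuous_const (continuous_mul_const t)

lemma exists_isLeast_slopeBounds (h : (slopeBounds ℓ a).Nonempty) :
    ∃ c, IsLeast (slopeBounds ℓ a) c :=
  ⟨_, isClosed_slopeBounds.isLeast_csInf h ⟨0, fun _ hc ↦ hc.1⟩⟩

end SlopeBounds

namespace IsFreeBoundarySubsolution

variable {u0 ℓ : ℝ → ℝ} {a κ c : ℝ}

lemma add_one_mem_slopeBounds (h : IsFreeBoundarySubsolution u0 ℓ a) (hκ : -1 ≤ κ)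
    (hu0 : ∀ t ∈ Icc 0 a, u0 t ≤ κ * t) : κ + 1 ∈ slopeBounds ℓ a := by
  refine ⟨by linarith, fun t ht ↦ ?_⟩
  linarith [h t ht, hu0 t ht, volume_real_activeDelays_le (ℓ := ℓ) ht.1]

lemma add_div_mem_slopeBounds (h : IsFreeBoundarySubsolution u0 ℓ a) (hκ : 0 ≤ κ)
    (hu0 : ∀ t ∈ Icc 0 a, u0 t ≤ κ * t) (hc : c ∈ slopeBounds ℓ a) :
    κ + c / (1 + c) ∈ slopeBounds ℓ a := by
  obtain ⟨hc0, hℓ⟩ := hc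
  refine ⟨by positivity, fun t ht ↦ ?_⟩
  have hvol : volume.real (activeDelays ℓ t) ≤ c / (1 + c) * t :=
    volume_real_activeDelays_le_of_le_mul hc0 ht.1 fun r hr ↦ hℓ r ⟨hr.1, hr.2.trans ht.2⟩
  linarith [h t ht, hu0 t ht]

end IsFreeBoundarySubsolution

lemma le_add_sqrt_div_two_of_le_add_div {κ c : ℝ} (hc : -1 < c) (h : c ≤ κ + c / (1 + c)) :
    c ≤ (κ + √(κ ^ 2 + 4 * κ)) / 2 := by
  have hquad : c ^ 2 ≤ κ * c + κ := by
    have hmul : (c - κ) * (1 + c) ≤ c := by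
      rw [← le_div_iff₀ (by linarith)]
      linarith
    linarith
  have hdisc : 2 * c - κ ≤ √(κ ^ 2 + 4 * κ) := Real.le_sqrt_of_sq_le (by linarith)
  linarith

theorem mancala_freeBoundary_upper_vanishing_datum_general {κ a γ : ℝ} {u0 ℓ : ℝ → ℝ} (hκ : 0 ≤ κ)
    (hγ : γ = (-κ + √(κ ^ 2 + 4 * κ)) / 2) (hℓ : IsFreeBoundarySubsolution u0 ℓ a)
    (hu0 : ∀ t ∈ Icc 0 a, u0 t ≤ κ * t) :
    ∀ t ∈ Icc 0 a, ℓ t ≤ κ * t + γ * t := by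
  obtain ⟨c, hc, hleast⟩ := exists_isLeast_slopeBounds
    ⟨κ + 1, hℓ.add_one_mem_slopeBounds (by linarith) hu0⟩
  have himproved : c ≤ κ + c / (1 + c) := hleast (hℓ.add_div_mem_slopeBounds hκ hu0 hc)
  have hroot : c ≤ κ + γ := by
    linarith [le_add_sqrt_div_two_of_le_add_div (by linarith [hc.1]) himproved]
  intro t ht
  calc ℓ t ≤ c * t := hc.2 t ht
    _ ≤ (κ + γ) * t := mul_le_mul_of_nonneg_right hroot ht.1
    _ = κ * t + γ * t := add_mul κ γ t

/-- If `u0(t) ≤ κ t` on `[0,a]`, then any nonnegative solution of the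
nonlocal free-boundary equation satisfies `ℓ(t) ≤ κ t + γ t` on `[0,a]`, where
`γ = (−κ + √(κ² + 4κ))/2` is the positive root of `γ² + κγ − κ = 0`. -/
theorem mancala_freeBoundary_upper_vanishing_datum
    (κ a : ℝ) (hκ : 0 < κ) (ha : 0 < a)
    (γ : ℝ) (hγ : γ = (-κ + Real.sqrt (κ ^ 2 + 4 * κ)) / 2)
    (u0 : ℝ → ℝ)
    (hu0_nonneg : ∀ t ≥ (0 : ℝ), 0 ≤ u0 t)
    (ℓ : ℝ → ℝ)
    (hℓ_nonneg : ∀ t ≥ (0 : ℝ), 0 ≤ ℓ t)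
    (hℓ : ∀ t ≥ (0 : ℝ),
      ℓ t = u0 t + (volume {s : ℝ | s ∈ Set.Icc 0 t ∧ ℓ (t - s) > s}).toReal)
    (h_upper : ∀ t ∈ Set.Icc (0 : ℝ) a, u0 t ≤ κ * t) :
    ∀ t ∈ Set.Icc (0 : ℝ) a, ℓ t ≤ κ * t + γ * t :=
  mancala_freeBoundary_upper_vanishing_datum_general hκ.le hγ (fun t ht ↦ (hℓ t ht.1).le) h_upper
end

section
/- Let κ > 0, a > 0, and let γ = (−κ + √(κ² + 4κ))/2 be the positive root of γ² + κγ − κ = 0. Let u0 : [0,∞) → ℝ be nonnegative and let ℓ : [0,∞) → ℝ be nonnegative and satisfy the nonlocal free-boundary equation ℓ(t) = u0(t) + |{ s ∈ [0,t] : ℓ(t−s) > s }| for every t ∈ [0,∞). If u0(t) ≥ κ·t for all t ∈ [0,a], then ℓ(t) ≥ κ·t + γ·t for all t ∈ [0,a]. -/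
open MeasureTheory Set

/-!
The measure term of the equation is monotone in `ℓ` and sends the line `s ↦ c * s` to the line
`t ↦ c / (1 + c) * t`. Let `c` be the best slope with `c * t ≤ ℓ t` on `[0, a]`. The equation
improves an admissible slope `c ≥ 0` to `κ + c / (1 + c)`, so maximality forces
`κ + c / (1 + c) ≤ c`, that is `κ * c + κ ≤ c ^ 2`, whence `c` is at least the positive root
`κ + γ` of `x ^ 2 = κ * x + κ`.
-/

/-- The nonlocal term `|{s ∈ [0, t] : ℓ (t - s) > s}|` of the free-boundary equation, as a real
number: the set lies in `[0, t]`, so its measure is finite. -/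
noncomputable def nonlocalTerm (ℓ : ℝ → ℝ) (t : ℝ) : ℝ :=
  volume.real {s : ℝ | s ∈ Icc 0 t ∧ ℓ (t - s) > s}

theorem nonlocalTerm_nonneg (ℓ : ℝ → ℝ) (t : ℝ) : 0 ≤ nonlocalTerm ℓ t :=
  measureReal_nonneg

theorem nonlocalTerm_mono {f g : ℝ → ℝ} {t : ℝ} (hfg : ∀ s ∈ Icc 0 t, f s ≤ g s) :
    nonlocalTerm f t ≤ nonlocalTerm g t := by
  refine measureReal_mono (fun s ⟨hs, hfs⟩ => ⟨hs, hfs.trans_le (hfg _ ?_)⟩)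
    (measure_ne_top_of_subset (fun s hs => hs.1) measure_Icc_lt_top.ne)
  exact ⟨sub_nonneg.2 hs.2, sub_le_self t hs.1⟩

theorem nonlocalTerm_const_mul {c t : ℝ} (hc : 0 ≤ c) (ht : 0 ≤ t) :
    nonlocalTerm (fun s => c * s) t = c / (1 + c) * t := by
  have hc' : 0 < 1 + c := by positivity
  have slope_le_one : c / (1 + c) ≤ 1 := (div_le_one hc').2 (by linarith)
  have lt_iff (s : ℝ) : s < c * (t - s) ↔ s < c / (1 + c) * t := by
    rw [div_mul_eq_mul_div, lt_div_iff₀ hc']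
    constructor <;> intro <;> linarith
  have set_eq : {s : ℝ | s ∈ Icc 0 t ∧ c * (t - s) > s} = Ico 0 (c / (1 + c) * t) := by
    ext s
    simp only [mem_ofPred_eq, mem_Icc, mem_Ico, gt_iff_lt, lt_iff]
    exact ⟨fun h => ⟨h.1.1, h.2⟩,
      fun h => ⟨⟨h.1, h.2.le.trans (mul_le_of_le_one_left ht slope_le_one)⟩, h.2⟩⟩
  rw [nonlocalTerm, set_eq, Real.volume_real_Ico_of_le (by positivity), sub_zero]

/-- The largest `c` such that `c * t ≤ f t` on `(0, a]`, meaningful when `0 < a` and some such `c`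
exists (otherwise the infimum is `0`). -/
noncomputable def bestSlope (f : ℝ → ℝ) (a : ℝ) : ℝ :=
  ⨅ t : Ioc (0 : ℝ) a, f t / t

section bestSlope

variable {f : ℝ → ℝ} {a b : ℝ}

theorem le_bestSlope (ha : 0 < a) (hb : ∀ t ∈ Ioc 0 a, b * t ≤ f t) : b ≤ bestSlope f a := by
  have : Nonempty (Ioc 0 a) := ⟨a, ha, le_rfl⟩
  exact le_ciInf fun t => (le_div_iff₀ t.2.1).2 (hb t t.2)

theorem bestSlope_mul_le (hb : ∀ t ∈ Icc 0 a, b * t ≤ f t) :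
    ∀ t ∈ Icc 0 a, bestSlope f a * t ≤ f t := by
  intro t ht
  rcases ht.1.eq_or_lt with rfl | ht_pos
  · simpa only [mul_zero] using hb 0 ht
  have bddBelow : BddBelow (range fun t : Ioc (0 : ℝ) a => f t / t) :=
    ⟨b, forall_mem_range.2 fun s => (le_div_iff₀ s.2.1).2 (hb s (Ioc_subset_Icc_self s.2))⟩
  exact (le_div_iff₀ ht_pos).1 (ciInf_le bddBelow ⟨t, ht_pos, ht.2⟩)

end bestSlope

theorem add_root_le_of_add_div_le {κ c : ℝ} (hc : 0 ≤ c) (h : κ + c / (1 + c) ≤ c) :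
    κ + (-κ + √(κ ^ 2 + 4 * κ)) / 2 ≤ c := by
  have κ_le : κ ≤ c := (le_add_of_nonneg_right (by positivity)).trans h
  have quadratic_le : κ * c + κ ≤ c ^ 2 := by
    have : c / (1 + c) * (1 + c) = c := div_mul_cancel₀ c (by positivity)
    linarith [mul_le_mul_of_nonneg_right h (by positivity : 0 ≤ 1 + c)]
  have sqrt_le : √(κ ^ 2 + 4 * κ) ≤ 2 * c - κ :=
    Real.sqrt_le_iff.2 ⟨by linarith, by linarith⟩
  linarith

theorem add_div_mul_le_of_add_nonlocalTerm_le {κ c a : ℝ} {ℓ : ℝ → ℝ} (hc : 0 ≤ c)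
    (hℓ : ∀ t ∈ Icc 0 a, κ * t + nonlocalTerm ℓ t ≤ ℓ t)
    (hcℓ : ∀ t ∈ Icc 0 a, c * t ≤ ℓ t) :
    ∀ t ∈ Icc 0 a, (κ + c / (1 + c)) * t ≤ ℓ t := by
  intro t ht
  calc (κ + c / (1 + c)) * t
      = κ * t + nonlocalTerm (fun s => c * s) t := by rw [nonlocalTerm_const_mul hc ht.1, add_mul]
    _ ≤ κ * t + nonlocalTerm ℓ t := by
      gcongr
      exact nonlocalTerm_mono fun s hs => hcℓ s (Icc_subset_Icc_right ht.2 hs)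
    _ ≤ ℓ t := hℓ t ht

theorem mancala_freeBoundary_lower_vanishing_datum_general {κ a γ : ℝ} {ℓ : ℝ → ℝ}
    (hκ : 0 ≤ κ) (ha : 0 < a) (hγ : γ = (-κ + √(κ ^ 2 + 4 * κ)) / 2)
    (hℓ : ∀ t ∈ Icc 0 a, κ * t + nonlocalTerm ℓ t ≤ ℓ t) :
    ∀ t ∈ Icc 0 a, κ * t + γ * t ≤ ℓ t := by
  have κ_mul_le : ∀ t ∈ Icc 0 a, κ * t ≤ ℓ t := fun t ht =>
    (le_add_of_nonneg_right (nonlocalTerm_nonneg ℓ t)).trans (hℓ t ht)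
  have slope_mul_le := bestSlope_mul_le κ_mul_le
  have slope_nonneg : 0 ≤ bestSlope ℓ a :=
    hκ.trans (le_bestSlope ha fun t ht => κ_mul_le t (Ioc_subset_Icc_self ht))
  have improved_slope_le : κ + bestSlope ℓ a / (1 + bestSlope ℓ a) ≤ bestSlope ℓ a :=
    le_bestSlope ha fun t ht =>
      add_div_mul_le_of_add_nonlocalTerm_le slope_nonneg hℓ slope_mul_le t (Ioc_subset_Icc_self ht)
  have root_le : κ + γ ≤ bestSlope ℓ a :=
    hγ ▸ add_root_le_of_add_div_le slope_nonneg improved_slope_le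
  intro t ht
  calc κ * t + γ * t = (κ + γ) * t := (add_mul κ γ t).symm
    _ ≤ bestSlope ℓ a * t := mul_le_mul_of_nonneg_right root_le ht.1
    _ ≤ ℓ t := slope_mul_le t ht

/-- If `u0(t) ≥ κ t` on `[0,a]`, then any nonnegative solution of the
nonlocal free-boundary equation satisfies `ℓ(t) ≥ κ t + γ t` on `[0,a]`, where
`γ = (−κ + √(κ² + 4κ))/2` is the positive root of `γ² + κγ − κ = 0`. -/
theorem mancala_freeBoundary_lower_vanishing_datum
    (κ a : ℝ) (hκ : 0 < κ) (ha : 0 < a)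
    (γ : ℝ) (hγ : γ = (-κ + Real.sqrt (κ ^ 2 + 4 * κ)) / 2)
    (u0 : ℝ → ℝ)
    (hu0_nonneg : ∀ t ≥ (0 : ℝ), 0 ≤ u0 t)
    (ℓ : ℝ → ℝ)
    (hℓ_nonneg : ∀ t ≥ (0 : ℝ), 0 ≤ ℓ t)
    (hℓ : ∀ t ≥ (0 : ℝ),
      ℓ t = u0 t + (volume {s : ℝ | s ∈ Set.Icc 0 t ∧ ℓ (t - s) > s}).toReal)
    (h_lower : ∀ t ∈ Set.Icc (0 : ℝ) a, κ * t ≤ u0 t) :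
    ∀ t ∈ Set.Icc (0 : ℝ) a, κ * t + γ * t ≤ ℓ t := by
  exact mancala_freeBoundary_lower_vanishing_datum_general hκ.le ha hγ fun t ht =>
    (add_le_add_left (h_lower t ht) _).trans_eq (hℓ t ht.1).symm
end

section
/- Let u0 : [0,∞) → ℝ be nonnegative, right-continuous, of locally bounded variation, satisfying u0(t) ≥ α for all t ∈ [0,α) for some α > 0, and let ℓ : [0,∞) → ℝ be the solution of the nonlocal free-boundary equation ℓ(t) = u0(t) + |{ s ∈ [0,t] : ℓ(t−s) > s }| for all t ≥ 0. Define v(τ,ξ) := u0(ξ) + |{ s ∈ [0,τ] : ℓ(s) + s > ξ }| for all 0 ≤ τ ≤ ξ. Then v(τ,τ) = ℓ(τ) for every τ ≥ 0, and v satisfies the integral equation v(τ,ξ) = u0(ξ) + |{ s ∈ [0,τ] : v(s,s) + s > ξ }| for all 0 ≤ τ ≤ ξ. -/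
open MeasureTheory Set

/-! The reflection `s ↦ τ - s` preserves `[0, τ]` and Lebesgue measure, and it carries the condition
`ℓ (τ - s) > s` to `ℓ s + s > τ`. The equation for `ℓ` is therefore the definition of `v` on the
diagonal, and `ℓ` may be replaced by the diagonal trace of `v` in that definition. -/

theorem measure_preimage_const_sub {G : Type*} [MeasurableSpace G] [AddGroup G] [MeasurableAdd G]
    [MeasurableNeg G] (μ : Measure G) [μ.IsNegInvariant] [μ.IsAddLeftInvariant] (g : G)
    (A : Set G) : μ ((fun s => g - s) ⁻¹' A) = μ A :=
  (Measure.measurePreserving_sub_left μ g).measure_preimage_equiv (f := .subLeft g) A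

theorem measure_mem_Icc_and_apply_sub_gt {G : Type*} [MeasurableSpace G] [AddCommGroup G]
    [PartialOrder G] [IsOrderedAddMonoid G] [MeasurableAdd G] [MeasurableNeg G] (μ : Measure G)
    [μ.IsNegInvariant] [μ.IsAddLeftInvariant] (f : G → G) (t : G) :
    μ {s | s ∈ Icc 0 t ∧ f (t - s) > s} = μ {s | s ∈ Icc 0 t ∧ f s + s > t} := by
  have gt_iff (s : G) : f (t - s) > s ↔ f (t - s) + (t - s) > t := by
    rw [gt_iff_lt, gt_iff_lt, ← sub_lt_iff_lt_add, sub_sub_cancel]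
  have reflect : {s | s ∈ Icc 0 t ∧ f (t - s) > s} =
      (fun s => t - s) ⁻¹' {s | s ∈ Icc 0 t ∧ f s + s > t} :=
    Set.ext fun s => and_congr sub_mem_Icc_zero_iff_right.symm (gt_iff s)
  rw [reflect, measure_preimage_const_sub]

theorem mancala_integralSolution_from_freeBoundary_general
    (u0 ℓ : ℝ → ℝ)
    (hℓ : ∀ t ≥ (0 : ℝ),
      ℓ t = u0 t + (volume {s : ℝ | s ∈ Set.Icc 0 t ∧ ℓ (t - s) > s}).toReal)
    (v : ℝ → ℝ → ℝ)
    (hv : ∀ τ ξ : ℝ, 0 ≤ τ → τ ≤ ξ →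
      v τ ξ = u0 ξ + (volume {s : ℝ | s ∈ Set.Icc 0 τ ∧ ℓ s + s > ξ}).toReal) :
    (∀ τ ≥ (0 : ℝ), v τ τ = ℓ τ) ∧
    (∀ τ ξ : ℝ, 0 ≤ τ → τ ≤ ξ →
      v τ ξ = u0 ξ + (volume {s : ℝ | s ∈ Set.Icc 0 τ ∧ v s s + s > ξ}).toReal) := by
  have diagonal : ∀ τ ≥ (0 : ℝ), v τ τ = ℓ τ := fun τ hτ => by
    rw [hv τ τ hτ le_rfl, hℓ τ hτ, measure_mem_Icc_and_apply_sub_gt]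
  refine ⟨diagonal, fun τ ξ hτ hξ => ?_⟩
  have same_set : {s | s ∈ Icc 0 τ ∧ v s s + s > ξ} = {s | s ∈ Icc 0 τ ∧ ℓ s + s > ξ} :=
    Set.ext fun s => and_congr_right fun hs => by rw [diagonal s hs.1]
  rw [hv τ ξ hτ hξ, same_set]

/-- With `v(τ,ξ) := u0(ξ) + |{ s ∈ [0,τ] : ℓ(s) + s > ξ }|`, the
diagonal trace satisfies `v(τ,τ) = ℓ(τ)` and `v` solves the integral equation
`v(τ,ξ) = u0(ξ) + |{ s ∈ [0,τ] : v(s,s) + s > ξ }|` on `0 ≤ τ ≤ ξ`. -/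
theorem mancala_integralSolution_from_freeBoundary
    (u0 : ℝ → ℝ)
    (hu0_nonneg : ∀ t ≥ (0 : ℝ), 0 ≤ u0 t)
    (hu0_rc : ∀ t ≥ (0 : ℝ), ContinuousWithinAt u0 (Set.Ici t) t)
    (hu0_bv : ∀ a > (0 : ℝ), BoundedVariationOn u0 (Set.Icc 0 a))
    (α : ℝ) (hα : 0 < α)
    (hu0_pos : ∀ t ∈ Set.Ico (0 : ℝ) α, α ≤ u0 t)
    (ℓ : ℝ → ℝ)
    (hℓ : ∀ t ≥ (0 : ℝ),
      ℓ t = u0 t + (volume {s : ℝ | s ∈ Set.Icc 0 t ∧ ℓ (t - s) > s}).toReal)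
    (v : ℝ → ℝ → ℝ)
    (hv : ∀ τ ξ : ℝ, 0 ≤ τ → τ ≤ ξ →
      v τ ξ = u0 ξ + (volume {s : ℝ | s ∈ Set.Icc 0 τ ∧ ℓ s + s > ξ}).toReal) :
    (∀ τ ≥ (0 : ℝ), v τ τ = ℓ τ) ∧
    (∀ τ ξ : ℝ, 0 ≤ τ → τ ≤ ξ →
      v τ ξ = u0 ξ + (volume {s : ℝ | s ∈ Set.Icc 0 τ ∧ v s s + s > ξ}).toReal) :=
  mancala_integralSolution_from_freeBoundary_general u0 ℓ hℓ v hv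
end

section
/- Let u0 : [0,∞) → ℝ be nonnegative, bounded, right-continuous, of locally bounded variation, integrable on (0,∞), and satisfying u0(t) ≥ α for all t ∈ [0,α) for some α > 0. Let ℓ be the solution of the nonlocal free-boundary equation ℓ(t) = u0(t) + |{ s ∈ [0,t] : ℓ(t−s) > s }|, and define v(τ,ξ) := u0(ξ) + |{ s ∈ [0,τ] : ℓ(s) + s > ξ }| for 0 ≤ τ ≤ ξ. Then for every τ ≥ 0 the function ξ ↦ v(τ,ξ) is integrable on (τ,∞) and ∫_τ^∞ v(τ,ξ) dξ = ∫_0^∞ u0(ξ) dξ (conservation of mass). -/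
open MeasureTheory Set

/-!
At time `s` the pile of height `ℓ s` standing at position `s` is spread with unit density over
`(s, s + ℓ s)`, so `|{s ∈ [0,τ] : ℓ s + s > ξ}|` is the mass laid down at `ξ` up to time `τ`. By
Tonelli the total mass laid down up to time `τ` is `∫₀^τ ℓ⁺`. What falls at positions `y ≤ τ` has
density `ℓ y - u0 y` by the free-boundary equation, hence `∫_τ^∞ (v τ - u0) = ∫₀^τ (u0 + ℓ⁻)`, and
the last term vanishes when `ℓ ≥ 0`. Measurability of `ℓ` comes from `y ↦ |{…}| - y` being antitone
along the diagonal `τ = ξ = y`.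
-/

theorem lintegral_measure_setOf_le_and_lt {X : Type*} [MeasurableSpace X] {μ : Measure X}
    [SFinite μ] {f g : X → ℝ} (hf : AEMeasurable f μ) (hg : AEMeasurable g μ) :
    ∫⁻ y, μ {x | f x ≤ y ∧ y < g x} = ∫⁻ x, ENNReal.ofReal (g x - f x) ∂μ := by
  have hregion : NullMeasurableSet {p : X × ℝ | f p.1 ≤ p.2 ∧ p.2 < g p.1} (μ.prod volume) :=
    (nullMeasurableSet_le hf.comp_fst measurable_snd.aemeasurable).inter
      (nullMeasurableSet_lt measurable_snd.aemeasurable hg.comp_fst)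
  have hslice : ∀ᵐ y, NullMeasurableSet {x | f x ≤ y ∧ y < g x} μ :=
    .of_forall fun y ↦ (nullMeasurableSet_le hf aemeasurable_const).inter
      (nullMeasurableSet_lt aemeasurable_const hg)
  calc ∫⁻ y, μ {x | f x ≤ y ∧ y < g x}
      = ∫⁻ y, (∫⁻ x, {p : X × ℝ | f p.1 ≤ p.2 ∧ p.2 < g p.1}.indicator 1 (x, y) ∂μ) :=
        lintegral_congr_ae <| hslice.mono fun y hy ↦ (lintegral_indicator_one₀ hy).symm
    _ = ∫⁻ x, (∫⁻ y, {p : X × ℝ | f p.1 ≤ p.2 ∧ p.2 < g p.1}.indicator 1 (x, y)) ∂μ :=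
        (lintegral_lintegral_swap (f := fun x y ↦ Set.indicator _ 1 (x, y))
          (aemeasurable_one.indicator₀ hregion)).symm
    _ = ∫⁻ x, volume (Ico (f x) (g x)) ∂μ :=
        lintegral_congr fun x ↦ lintegral_indicator_one (s := Ico (f x) (g x)) measurableSet_Ico
    _ = ∫⁻ x, ENNReal.ofReal (g x - f x) ∂μ := by simp only [Real.volume_Ico]

/-- The times up to `τ` at which the pile then lifted, of height `ℓ s` at position `s`, is sown
beyond position `ξ`. -/
def sowingTimes (ℓ : ℝ → ℝ) (τ ξ : ℝ) : Set ℝ :=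
  {s | s ∈ Icc 0 τ ∧ ℓ s + s > ξ}

/-- The mass sown at position `ξ ≥ τ` up to time `τ`; the solution is `v τ ξ = u0 ξ + sown ℓ τ ξ`.
For `ξ < τ` the definition also counts piles lifted beyond `ξ`, so it loses this meaning. -/
noncomputable def sown (ℓ : ℝ → ℝ) (τ ξ : ℝ) : ℝ :=
  volume.real (sowingTimes ℓ τ ξ)

section Sown

variable {ℓ : ℝ → ℝ} {τ τ' ξ ξ' : ℝ}

theorem sowingTimes_subset_Icc : sowingTimes ℓ τ ξ ⊆ Icc 0 τ :=
  fun _ hs ↦ hs.1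

theorem sowingTimes_subset_union (hξ : ξ ≤ ξ') :
    sowingTimes ℓ τ' ξ' ⊆ sowingTimes ℓ τ ξ ∪ Ioc τ τ' := by
  rintro s ⟨⟨hs0, hsτ'⟩, hs⟩
  rcases le_or_gt s τ with hsτ | hτs
  · exact Or.inl ⟨⟨hs0, hsτ⟩, hξ.trans_lt hs⟩
  · exact Or.inr ⟨hτs, hsτ'⟩

theorem sown_nonneg : 0 ≤ sown ℓ τ ξ :=
  measureReal_nonneg

theorem volume_sowingTimes_ne_top : volume (sowingTimes ℓ τ ξ) ≠ ⊤ :=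
  measure_ne_top_of_subset sowingTimes_subset_Icc measure_Icc_lt_top.ne

theorem ofReal_sown : ENNReal.ofReal (sown ℓ τ ξ) = volume (sowingTimes ℓ τ ξ) :=
  ofReal_measureReal volume_sowingTimes_ne_top

theorem sown_eq_zero_of_nonpos (hτ : τ ≤ 0) : sown ℓ τ ξ = 0 := by
  have hnull : volume (sowingTimes ℓ τ ξ) = 0 :=
    measure_mono_null sowingTimes_subset_Icc (by simpa using hτ)
  simp [sown, measureReal_def, hnull]

theorem sown_le_add (hτ : τ ≤ τ') (hξ : ξ ≤ ξ') : sown ℓ τ' ξ' ≤ sown ℓ τ ξ + (τ' - τ) :=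
  calc sown ℓ τ' ξ'
      ≤ volume.real (sowingTimes ℓ τ ξ ∪ Ioc τ τ') :=
        measureReal_mono (sowingTimes_subset_union hξ)
          (measure_union_ne_top volume_sowingTimes_ne_top measure_Ioc_lt_top.ne)
    _ ≤ sown ℓ τ ξ + volume.real (Ioc τ τ') := measureReal_union_le _ _
    _ = sown ℓ τ ξ + (τ' - τ) := by rw [Real.volume_real_Ioc_of_le hτ]

theorem antitone_sown_sub {θ : ℝ → ℝ} (hθ : Monotone θ) :
    Antitone fun y ↦ sown ℓ (θ y) y - θ y := fun a b hab ↦ by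
  linarith [sown_le_add (ℓ := ℓ) (hθ hab) hab]

theorem measurable_sown {θ : ℝ → ℝ} (hθ : Monotone θ) : Measurable fun y ↦ sown ℓ (θ y) y := by
  simpa only [Pi.add_def, sub_add_cancel] using (antitone_sown_sub hθ).measurable.add hθ.measurable

theorem intervalIntegrable_sown {θ : ℝ → ℝ} (hθ : Monotone θ) (a b : ℝ) :
    IntervalIntegrable (fun y ↦ sown ℓ (θ y) y) volume a b := by
  simpa only [sub_add_cancel] using
    (antitone_sown_sub hθ).intervalIntegrable.add hθ.intervalIntegrable

theorem sowingTimes_min_eq_inter (ℓ : ℝ → ℝ) (τ y : ℝ) :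
    sowingTimes ℓ (min τ y) y = {s | s ≤ y ∧ y < ℓ s + s} ∩ Icc 0 τ := by
  ext s
  simp only [sowingTimes, mem_inter_iff, mem_ofPred_eq, mem_Icc, le_min_iff]
  tauto

-- Stopping at time `min τ y` lets a single application of Tonelli cover both the positions `y ≤ τ`
-- already passed and the positions `y > τ` still ahead.
theorem lintegral_ofReal_sown_min (hℓ : AEMeasurable ℓ (volume.restrict (Ioc 0 τ))) :
    ∫⁻ y, ENNReal.ofReal (sown ℓ (min τ y) y) = ∫⁻ s in Ioc 0 τ, ENNReal.ofReal (ℓ s) := by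
  rw [restrict_Ioc_eq_restrict_Icc] at hℓ ⊢
  simpa [ofReal_sown, sowingTimes_min_eq_inter, Measure.restrict_apply' measurableSet_Icc] using
    lintegral_measure_setOf_le_and_lt aemeasurable_id (hℓ.add aemeasurable_id)

theorem integrable_sown_min (hℓ : IntegrableOn ℓ (Ioc 0 τ)) :
    Integrable fun y ↦ sown ℓ (min τ y) y := by
  have hmeas : Measurable fun y ↦ sown ℓ (min τ y) y :=
    measurable_sown (monotone_const.min monotone_id)
  rw [← lintegral_ofReal_ne_top_iff_integrable hmeas.aestronglyMeasurable
    (.of_forall fun _ ↦ sown_nonneg), lintegral_ofReal_sown_min hℓ.aemeasurable]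
  exact hℓ.lintegral_lt_top.ne

theorem integral_sown_min (hτ : 0 ≤ τ) (hℓ : IntegrableOn ℓ (Ioc 0 τ)) :
    ∫ y, sown ℓ (min τ y) y = ∫ s in 0..τ, (ℓ s)⁺ := by
  have hpos : IntegrableOn (fun s ↦ (ℓ s)⁺) (Ioc 0 τ) := hℓ.pos_part
  rw [integral_eq_lintegral_of_nonneg_ae (.of_forall fun _ ↦ sown_nonneg)
      (integrable_sown_min hℓ).aestronglyMeasurable,
    lintegral_ofReal_sown_min hℓ.aemeasurable, intervalIntegral.integral_of_le hτ,
    integral_eq_lintegral_of_nonneg_ae (.of_forall fun _ ↦ posPart_nonneg _)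
      hpos.aestronglyMeasurable]
  simp [posPart_def]

theorem integrableOn_sown_Ioi (hℓ : IntegrableOn ℓ (Ioc 0 τ)) :
    IntegrableOn (sown ℓ τ) (Ioi τ) :=
  (integrable_sown_min hℓ).integrableOn.congr_fun
    (fun y hy ↦ congrArg (sown ℓ · y) (min_eq_left (mem_Ioi.1 hy).le)) measurableSet_Ioi

theorem integral_sown_self_add_integral_Ioi (hτ : 0 ≤ τ) (hℓ : IntegrableOn ℓ (Ioc 0 τ)) :
    (∫ y in 0..τ, sown ℓ y y) + ∫ y in Ioi τ, sown ℓ τ y = ∫ s in 0..τ, (ℓ s)⁺ := by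
  have hint := integrable_sown_min hℓ
  have hdiag : ∫ y in 0..τ, sown ℓ y y = ∫ y in 0..τ, sown ℓ (min τ y) y :=
    intervalIntegral.integral_congr fun y hy ↦ by
      rw [uIcc_of_le hτ] at hy
      simp only [min_eq_right hy.2]
  have htail : ∫ y in Ioi τ, sown ℓ τ y = ∫ y in Ioi τ, sown ℓ (min τ y) y :=
    setIntegral_congr_fun measurableSet_Ioi fun y hy ↦ by rw [min_eq_left (mem_Ioi.1 hy).le]
  calc (∫ y in 0..τ, sown ℓ y y) + ∫ y in Ioi τ, sown ℓ τ y
      = ∫ y in Ioi 0, sown ℓ (min τ y) y := by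
        rw [hdiag, htail,
          intervalIntegral.integral_interval_add_Ioi hint.integrableOn hint.integrableOn]
    _ = ∫ y, sown ℓ (min τ y) y :=
        setIntegral_eq_integral_of_forall_compl_eq_zero fun y hy ↦
          sown_eq_zero_of_nonpos ((min_le_right τ y).trans (not_lt.1 hy))
    _ = ∫ s in 0..τ, (ℓ s)⁺ := integral_sown_min hτ hℓ

/-- The free-boundary equation with datum `u0`, written as `ℓ t = v t t`. -/
def IsFreeBoundary (u0 ℓ : ℝ → ℝ) : Prop :=
  ∀ t ≥ 0, ℓ t = u0 t + sown ℓ t t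

theorem sown_self_eq (ℓ : ℝ → ℝ) (t : ℝ) :
    sown ℓ t t = volume.real {s | s ∈ Icc 0 t ∧ ℓ (t - s) > s} := by
  have hpre : {s | s ∈ Icc 0 t ∧ ℓ (t - s) > s} = (t - ·) ⁻¹' sowingTimes ℓ t t := by
    ext s
    simp only [sowingTimes, mem_preimage, mem_ofPred_eq, mem_Icc]
    grind
  rw [hpre, sown, measureReal_def, measureReal_def,
    (Measure.measurePreserving_sub_left volume t).measure_preimage_emb
      (MeasurableEquiv.subLeft t).measurableEmbedding]

variable {u0 : ℝ → ℝ}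

theorem isFreeBoundary_iff :
    IsFreeBoundary u0 ℓ ↔
      ∀ t ≥ 0, ℓ t = u0 t + (volume {s | s ∈ Icc 0 t ∧ ℓ (t - s) > s}).toReal := by
  simp only [IsFreeBoundary, sown_self_eq, measureReal_def]

theorem IsFreeBoundary.integral_negPart_eq_zero (hℓ : IsFreeBoundary u0 ℓ) (hτ : 0 ≤ τ)
    (hu0 : ∀ t ≥ 0, 0 ≤ u0 t) : ∫ s in 0..τ, (ℓ s)⁻ = 0 := by
  refine intervalIntegral.integral_zero_ae (.of_forall fun s hs ↦ ?_)
  rw [uIoc_of_le hτ] at hs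
  rw [negPart_eq_zero, hℓ s hs.1.le]
  exact add_nonneg (hu0 s hs.1.le) sown_nonneg

theorem IsFreeBoundary.intervalIntegrable (hℓ : IsFreeBoundary u0 ℓ) (hτ : 0 ≤ τ)
    (hu0 : IntervalIntegrable u0 volume 0 τ) : IntervalIntegrable ℓ volume 0 τ :=
  (hu0.add (intervalIntegrable_sown monotone_id 0 τ)).congr fun t ht ↦ by
    rw [uIoc_of_le hτ] at ht
    exact (hℓ t ht.1.le).symm

theorem IsFreeBoundary.integral_sown_Ioi (hℓ : IsFreeBoundary u0 ℓ) (hτ : 0 ≤ τ)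
    (hu0 : IntervalIntegrable u0 volume 0 τ) :
    ∫ ξ in Ioi τ, sown ℓ τ ξ = (∫ s in 0..τ, u0 s) + ∫ s in 0..τ, (ℓ s)⁻ := by
  have hℓint := hℓ.intervalIntegrable hτ hu0
  have hdiag : IntervalIntegrable (fun s ↦ sown ℓ s s) volume 0 τ :=
    intervalIntegrable_sown monotone_id 0 τ
  have hneg : IntervalIntegrable (fun s ↦ (ℓ s)⁻) volume 0 τ :=
    ⟨hℓint.1.neg_part, hℓint.2.neg_part⟩
  have hpos : ∫ s in 0..τ, (ℓ s)⁺ =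
      (∫ s in 0..τ, u0 s) + (∫ s in 0..τ, sown ℓ s s) + ∫ s in 0..τ, (ℓ s)⁻ := by
    rw [← intervalIntegral.integral_add hu0 hdiag,
      ← intervalIntegral.integral_add (hu0.add hdiag) hneg]
    refine intervalIntegral.integral_congr fun s hs ↦ ?_
    rw [uIcc_of_le hτ] at hs
    simp only [← hℓ s hs.1]
    linarith [posPart_sub_negPart (ℓ s)]
  linarith [integral_sown_self_add_integral_Ioi hτ hℓint.1]

end Sown

theorem mancala_conservation_of_mass_general
    (u0 : ℝ → ℝ) (hu0_int : IntegrableOn u0 (Set.Ioi 0)) (ℓ : ℝ → ℝ)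
    (hℓ : ∀ t ≥ (0 : ℝ),
      ℓ t = u0 t + (volume {s : ℝ | s ∈ Set.Icc 0 t ∧ ℓ (t - s) > s}).toReal)
    (v : ℝ → ℝ → ℝ)
    (hv : ∀ τ ξ : ℝ, 0 ≤ τ → τ ≤ ξ →
      v τ ξ = u0 ξ + (volume {s : ℝ | s ∈ Set.Icc 0 τ ∧ ℓ s + s > ξ}).toReal) :
    ∀ τ ≥ (0 : ℝ),
      IntegrableOn (fun ξ => v τ ξ) (Set.Ioi τ) ∧
      ∫ ξ in Set.Ioi τ, v τ ξ = (∫ ξ in Set.Ioi (0 : ℝ), u0 ξ) + ∫ s in 0..τ, (ℓ s)⁻ := by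
  intro τ hτ
  have hfree : IsFreeBoundary u0 ℓ := isFreeBoundary_iff.2 hℓ
  have hu0 : IntervalIntegrable u0 volume 0 τ :=
    (intervalIntegrable_iff_integrableOn_Ioc_of_le hτ).2 (hu0_int.mono_set Ioc_subset_Ioi_self)
  have hu0_tail : IntegrableOn u0 (Ioi τ) := hu0_int.mono_set (Ioi_subset_Ioi hτ)
  have hsown : IntegrableOn (sown ℓ τ) (Ioi τ) :=
    integrableOn_sown_Ioi (hfree.intervalIntegrable hτ hu0).1
  have hv_eq : EqOn (v τ) (fun ξ ↦ u0 ξ + sown ℓ τ ξ) (Ioi τ) := fun ξ hξ ↦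
    hv τ ξ hτ (mem_Ioi.1 hξ).le
  refine ⟨(hu0_tail.add hsown).congr_fun hv_eq.symm measurableSet_Ioi, ?_⟩
  rw [setIntegral_congr_fun measurableSet_Ioi hv_eq, integral_add hu0_tail hsown,
    hfree.integral_sown_Ioi hτ hu0, ← intervalIntegral.integral_interval_add_Ioi hu0_int hu0_tail]
  ring

/-- Conservation of mass: for every `τ ≥ 0`, `v(τ,·)` is integrable
on `(τ,∞)` and `∫_τ^∞ v(τ,ξ) dξ = ∫_0^∞ u0(ξ) dξ`. -/
theorem mancala_conservation_of_mass
    (u0 : ℝ → ℝ)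
    (hu0_nonneg : ∀ t ≥ (0 : ℝ), 0 ≤ u0 t)
    (hu0_bdd : ∃ C : ℝ, ∀ t ≥ (0 : ℝ), u0 t ≤ C)
    (hu0_rc : ∀ t ≥ (0 : ℝ), ContinuousWithinAt u0 (Set.Ici t) t)
    (hu0_bv : ∀ a > (0 : ℝ), BoundedVariationOn u0 (Set.Icc 0 a))
    (hu0_int : IntegrableOn u0 (Set.Ioi 0))
    (α : ℝ) (hα : 0 < α)
    (hu0_pos : ∀ t ∈ Set.Ico (0 : ℝ) α, α ≤ u0 t)
    (ℓ : ℝ → ℝ)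
    (hℓ : ∀ t ≥ (0 : ℝ),
      ℓ t = u0 t + (volume {s : ℝ | s ∈ Set.Icc 0 t ∧ ℓ (t - s) > s}).toReal)
    (v : ℝ → ℝ → ℝ)
    (hv : ∀ τ ξ : ℝ, 0 ≤ τ → τ ≤ ξ →
      v τ ξ = u0 ξ + (volume {s : ℝ | s ∈ Set.Icc 0 τ ∧ ℓ s + s > ξ}).toReal) :
    ∀ τ ≥ (0 : ℝ),
      IntegrableOn (fun ξ => v τ ξ) (Set.Ioi τ) ∧
      ∫ ξ in Set.Ioi τ, v τ ξ = ∫ ξ in Set.Ioi (0 : ℝ), u0 ξ := by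
  intro τ hτ
  simpa [(isFreeBoundary_iff.2 hℓ).integral_negPart_eq_zero hτ hu0_nonneg] using
    mancala_conservation_of_mass_general u0 hu0_int ℓ hℓ v hv τ hτ
end

section
/- Fix m > 0 and let u*(x) := max(√(2m) − x, 0) for x ≥ 0. Then for every nonnegative measurable function u : (0,∞) → ℝ with u ∈ L²((0,∞)), x ↦ x·u(x) ∈ L¹((0,∞)), and ∫_0^∞ u(x) dx = m, the Lyapunov functional 𝔏(u) := ½ ∫_0^∞ (u(x)² + 2x·u(x)) dx satisfies 𝔏(u) ≥ 𝔏(u*), with equality if and only if u = u* almost everywhere; i.e., u* is the unique minimizer of 𝔏 over the admissible class with mass m. -/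
open MeasureTheory Set

/-- The Lyapunov functional `𝔏(u) = ½ ∫_0^∞ (u² + 2 x u) dx`. -/
noncomputable def mancalaLyapunov (u : ℝ → ℝ) : ℝ :=
  (1 / 2) * ∫ x in Set.Ioi (0 : ℝ), (u x ^ 2 + 2 * x * u x)

/-- The stationary profile `u*(x) = max(√(2m) − x, 0)`. -/
noncomputable def mancalaStationary (m : ℝ) : ℝ → ℝ :=
  fun x => max (Real.sqrt (2 * m) - x) 0

/-!
Subject to the mass constraint, minimizing `½ ∫ (u² + 2 V u)` is the same as minimizing
`½ ∫ (u² - 2 (c - V) u)`, where `c` is a Lagrange multiplier. The latter is minimized pointwise over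
`u ≥ 0` by `w = (c - V)⁺`, and since the integrand is quadratic with unit leading coefficient, any
other `u` loses at least `½ ∫ (u - w)²`. For `V x = x` on the half-line the mass of `w` is `c² / 2`,
whence `c = √(2m)`.
-/

lemma sq_sub_max_zero_add_le {s : ℝ} (hs : 0 ≤ s) (t : ℝ) :
    (s - max t 0) ^ 2 + (max t 0 ^ 2 - 2 * t * max t 0) ≤ s ^ 2 - 2 * t * s := by
  rcases le_total 0 t with ht | ht
  · rw [max_eq_left ht]
    exact le_of_eq (by ring)
  · rw [max_eq_right ht]
    linarith [mul_nonpos_of_nonpos_of_nonneg ht hs]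

lemma mul_max_sub_zero (v c : ℝ) :
    v * max (c - v) 0 = c * max (c - v) 0 - max (c - v) 0 ^ 2 := by
  rcases max_choice (c - v) 0 with h | h <;> rw [h] <;> ring

section Potential

variable {α : Type*} [MeasurableSpace α] {μ : Measure α} {V u : α → ℝ} {b c : ℝ}

/-- The energy `½ ∫ (u² + 2 V u) dμ` of a density `u` in the potential `V`; the Lyapunov functional
is the case `V x = x` of Lebesgue measure on the half-line. -/
noncomputable def potentialEnergy (μ : Measure α) (V u : α → ℝ) : ℝ :=
  (1 / 2) * ∫ x, (u x ^ 2 + 2 * V x * u x) ∂μ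

/-- The candidate minimizer `(c - V)⁺`, with the level `c` to be adjusted to the prescribed mass. -/
noncomputable def truncatedProfile (V : α → ℝ) (c : ℝ) : α → ℝ :=
  fun x => max (c - V x) 0

/-- The nonnegative densities whose mass and energy in the potential `V` are finite.
Integrability of `u` is its own field: for general `μ` and `V` the others do not imply it. -/
structure IsAdmissible (μ : Measure α) (V u : α → ℝ) : Prop where
  nonneg : 0 ≤ᵐ[μ] u
  memLp_two : MemLp u 2 μ
  integrable : Integrable u μ
  integrable_potential_mul : Integrable (fun x => V x * u x) μ

namespace IsAdmissible

lemma integrable_sq_add_two_mul (hu : IsAdmissible μ V u) :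
    Integrable (fun x => u x ^ 2 + 2 * V x * u x) μ := by
  simpa only [mul_assoc] using!
    hu.memLp_two.integrable_sq.add (hu.integrable_potential_mul.const_mul 2)

lemma integrable_sq_sub_two_mul (hu : IsAdmissible μ V u) (c : ℝ) :
    Integrable (fun x => u x ^ 2 - 2 * (c - V x) * u x) μ :=
  (hu.integrable_sq_add_two_mul.sub (hu.integrable.const_mul (2 * c))).congr
    (.of_forall fun x => by simp only [Pi.sub_apply]; ring)

lemma integral_sq_sub_two_mul (hu : IsAdmissible μ V u) (c : ℝ) :
    ∫ x, (u x ^ 2 - 2 * (c - V x) * u x) ∂μ =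
      2 * potentialEnergy μ V u - 2 * c * ∫ x, u x ∂μ := by
  calc ∫ x, (u x ^ 2 - 2 * (c - V x) * u x) ∂μ
      = ∫ x, (u x ^ 2 + 2 * V x * u x - 2 * c * u x) ∂μ := by congr with x; ring
    _ = 2 * potentialEnergy μ V u - 2 * c * ∫ x, u x ∂μ := by
      rw [integral_sub hu.integrable_sq_add_two_mul (hu.integrable.const_mul _),
        integral_const_mul, potentialEnergy]
      ring

end IsAdmissible

lemma isAdmissible_truncatedProfile (hV : ∀ᵐ x ∂μ, b ≤ V x)
    (hw : Integrable (truncatedProfile V c) μ) : IsAdmissible μ V (truncatedProfile V c) := by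
  have hnonneg (x : α) : 0 ≤ truncatedProfile V c x := le_max_right _ _
  have hbound : ∀ᵐ x ∂μ, ‖truncatedProfile V c x‖ ≤ max (c - b) 0 := by
    filter_upwards [hV] with x hx
    rw [Real.norm_of_nonneg (hnonneg x)]
    exact max_le_max_right 0 (sub_le_sub_left hx c)
  have hsq : Integrable (fun x => truncatedProfile V c x ^ 2) μ := by
    simpa only [sq] using hw.bdd_mul hw.aestronglyMeasurable hbound
  refine ⟨.of_forall hnonneg, (memLp_two_iff_integrable_sq hw.aestronglyMeasurable).mpr hsq, hw, ?_⟩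
  exact ((hw.const_mul c).sub hsq).congr (.of_forall fun x => (mul_max_sub_zero (V x) c).symm)

lemma potentialEnergy_truncatedProfile_add_le (hu : IsAdmissible μ V u)
    (hw : IsAdmissible μ V (truncatedProfile V c))
    (hmass : ∫ x, u x ∂μ = ∫ x, truncatedProfile V c x ∂μ) :
    potentialEnergy μ V (truncatedProfile V c) +
      (1 / 2) * ∫ x, (u x - truncatedProfile V c x) ^ 2 ∂μ ≤ potentialEnergy μ V u := by
  have hdist : Integrable (fun x => (u x - truncatedProfile V c x) ^ 2) μ :=
    (hu.memLp_two.sub hw.memLp_two).integrable_sq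
  have hmono := integral_mono_ae (hdist.add (hw.integrable_sq_sub_two_mul c))
    (hu.integrable_sq_sub_two_mul c)
    (hu.nonneg.mono fun x hx => sq_sub_max_zero_add_le hx (c - V x))
  rw [integral_add' hdist (hw.integrable_sq_sub_two_mul c), hw.integral_sq_sub_two_mul,
    hu.integral_sq_sub_two_mul, hmass] at hmono
  linarith

lemma potentialEnergy_congr_ae {v : α → ℝ} (h : u =ᵐ[μ] v) :
    potentialEnergy μ V u = potentialEnergy μ V v := by
  unfold potentialEnergy
  congr 1
  exact integral_congr_ae (h.mono fun x hx => by simp only [hx])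

lemma ae_eq_of_integral_sq_sub_nonpos {v : α → ℝ} (hu : MemLp u 2 μ) (hv : MemLp v 2 μ)
    (h : ∫ x, (u x - v x) ^ 2 ∂μ ≤ 0) : u =ᵐ[μ] v := by
  have hzero : (fun x => (u x - v x) ^ 2) =ᵐ[μ] 0 :=
    (integral_eq_zero_iff_of_nonneg (fun x => sq_nonneg _) (hu.sub hv).integrable_sq).mp
      (h.antisymm (integral_nonneg fun x => sq_nonneg _))
  exact hzero.mono fun x hx => sub_eq_zero.mp (pow_eq_zero_iff two_ne_zero |>.mp hx)

theorem mancala_Lyapunov_unique_minimizer_general (hu : IsAdmissible μ V u)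
    (hw : IsAdmissible μ V (truncatedProfile V c))
    (hmass : ∫ x, u x ∂μ = ∫ x, truncatedProfile V c x ∂μ) :
    potentialEnergy μ V (truncatedProfile V c) ≤ potentialEnergy μ V u ∧
    (potentialEnergy μ V u = potentialEnergy μ V (truncatedProfile V c) ↔
      u =ᵐ[μ] truncatedProfile V c) := by
  have hgap := potentialEnergy_truncatedProfile_add_le hu hw hmass
  have hdist : 0 ≤ ∫ x, (u x - truncatedProfile V c x) ^ 2 ∂μ :=
    integral_nonneg fun x => sq_nonneg _
  exact ⟨by linarith, fun heq => ae_eq_of_integral_sq_sub_nonpos hu.memLp_two hw.memLp_two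
    (by linarith), potentialEnergy_congr_ae⟩

end Potential

lemma setIntegral_Ioi_max_sub_zero {c : ℝ} (hc : 0 ≤ c) :
    ∫ x in Ioi (0 : ℝ), max (c - x) 0 = c ^ 2 / 2 := by
  calc ∫ x in Ioi (0 : ℝ), max (c - x) 0
      = ∫ x in Ioc 0 c, max (c - x) 0 :=
        setIntegral_eq_of_subset_of_forall_sdiff_eq_zero measurableSet_Ioi Ioc_subset_Ioi_self
          fun x hx => max_eq_right (sub_nonpos.mpr (not_le.mp fun h => hx.2 ⟨hx.1, h⟩).le)
    _ = ∫ x in Ioc 0 c, (c - x) :=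
        setIntegral_congr_fun measurableSet_Ioc fun x hx => max_eq_left (sub_nonneg.mpr hx.2)
    _ = ∫ x in (0 : ℝ)..c, (c - x) := (intervalIntegral.integral_of_le hc).symm
    _ = c ^ 2 / 2 := by
        rw [intervalIntegral.integral_sub (by simp) (by simp), intervalIntegral.integral_const,
          integral_id, smul_eq_mul]
        ring

lemma integral_mancalaStationary {m : ℝ} (hm : 0 ≤ m) :
    ∫ x in Ioi (0 : ℝ), mancalaStationary m x = m := by
  unfold mancalaStationary
  rw [setIntegral_Ioi_max_sub_zero (Real.sqrt_nonneg _), Real.sq_sqrt (by positivity)]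
  ring

/-- `u*` is the unique minimizer of the Lyapunov functional over
nonnegative `u ∈ L²((0,∞))` with `x·u ∈ L¹((0,∞))` and mass `m`. -/
theorem mancala_Lyapunov_unique_minimizer
    (m : ℝ) (hm : 0 < m)
    (u : ℝ → ℝ)
    (hu_nonneg : ∀ x ∈ Set.Ioi (0 : ℝ), 0 ≤ u x)
    (hu_L2 : MemLp u 2 (volume.restrict (Set.Ioi (0 : ℝ))))
    (hu_xL1 : Integrable (fun x => x * u x) (volume.restrict (Set.Ioi (0 : ℝ))))
    (hu_mass : ∫ x in Set.Ioi (0 : ℝ), u x = m) :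
    mancalaLyapunov (mancalaStationary m) ≤ mancalaLyapunov u ∧
    (mancalaLyapunov u = mancalaLyapunov (mancalaStationary m) ↔
      u =ᵐ[volume.restrict (Set.Ioi (0 : ℝ))] mancalaStationary m) := by
  have hw_mass := integral_mancalaStationary hm.le
  have hu_int := Integrable.of_integral_ne_zero (hu_mass.trans_ne hm.ne')
  have hw_int := Integrable.of_integral_ne_zero (hw_mass.trans_ne hm.ne')
  exact mancala_Lyapunov_unique_minimizer_general (V := fun x => x)
    ⟨ae_restrict_of_forall_mem measurableSet_Ioi hu_nonneg, hu_L2, hu_int, hu_xL1⟩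
    (isAdmissible_truncatedProfile (ae_restrict_of_forall_mem measurableSet_Ioi fun x hx => hx.le)
      hw_int)
    (hu_mass.trans hw_mass.symm)
end

section
/- Define real sequences (T_n), (M_n), (t_n), (m_n) for n ≥ 1 by: T_1 = 1, M_1 = 2, t_1 = 1, m_1 = 1, and for n ≥ 1, with α_n := 1/(n+1), set T_{n+1} := min(T_n + M_n, t_n + m_n), t_{n+1} := max(T_n + M_n, t_n + m_n), M_{n+1} := α_n·(1 + T_{n+1}), m_{n+1} := α_{n+1}·(1 + t_{n+1}). Then for all n ≥ 1: (a) m_n · M_n = 2; (b) 1 ≤ m_n ≤ m_{n+1} and M_{n+1} ≤ M_n ≤ 2; (c) m_n < M_n; (d) T_n ≤ t_n; (e) t_n < T_{n+1}. -/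
open Filter

/-!
Since `1 + T_n = n M_n` and `1 + t_n = (n + 1) m_n`, the recursion closes up on the values alone:
`(n + 1) M_{n+1}` and `(n + 2) m_{n+1}` are the minimum and the maximum of `(n + 1) M_n` and
`(n + 2) m_n`. As `min a b * max a b = a * b`, the product `m_n M_n` is conserved; comparing the
minimum and the maximum with their arguments gives the monotonicity, and `min a b ≤ max a b` gives
`T_n ≤ t_n`. The last inequality reads `M_n ≤ (1 + 1/n) m_n`, and `1 + 1/n < (1 + 1/(n+1))²` is what
keeps `m_n < M_n` from one step to the next.
-/

/-- The decoupled recursion for the values `M n` at the local maxima and `m n` at the local minima,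
obtained by eliminating the times `T n = n * M n - 1` and `t n = (n + 1) * m n - 1`. Indices start
at `1`, and denominators are cleared so that it makes sense in a ring. -/
structure IsExtremalValueRecursion {R : Type*} [CommRing R] [LinearOrder R] (M m : ℕ → R) :
    Prop where
  maxima_succ : ∀ n : ℕ, n ≥ 1 → ((n : R) + 1) * M (n + 1) =
    min (((n : R) + 1) * M n) (((n : R) + 2) * m n)
  minima_succ : ∀ n : ℕ, n ≥ 1 → ((n : R) + 2) * m (n + 1) =
    max (((n : R) + 1) * M n) (((n : R) + 2) * m n)

lemma sq_add_one_mul_lt_sq_add_two_mul {R : Type*} [CommRing R] [LinearOrder R]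
    [IsStrictOrderedRing R] {x a b : R} (hx : 1 ≤ x) (hb : 0 < b)
    (hab : x * a ≤ (x + 1) * b) :
    (x + 1) ^ 2 * a < (x + 2) ^ 2 * b := by
  have hx₀ : 0 < x := one_pos.trans_le hx
  have hcube : (x + 1) ^ 3 < x * (x + 2) ^ 2 := by nlinarith
  refine lt_of_mul_lt_mul_left ?_ hx₀.le
  calc x * ((x + 1) ^ 2 * a) = (x + 1) ^ 2 * (x * a) := by ring
    _ ≤ (x + 1) ^ 2 * ((x + 1) * b) := by gcongr
    _ = (x + 1) ^ 3 * b := by ring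
    _ < x * (x + 2) ^ 2 * b := by gcongr
    _ = x * ((x + 2) ^ 2 * b) := by ring

namespace IsExtremalValueRecursion

variable {R : Type*} [CommRing R] [LinearOrder R] {M m : ℕ → R} {n : ℕ}

lemma mul_maxima_le_mul_minima (h : IsExtremalValueRecursion M m) (h₁ : M 1 ≤ 2 * m 1)
    (hn : 1 ≤ n) : (n : R) * M n ≤ ((n : R) + 1) * m n := by
  induction n, hn using Nat.le_induction with
  | base => simpa [one_add_one_eq_two] using h₁
  | succ k hk _ =>
    have hle : ((k : R) + 1) * M (k + 1) ≤ ((k : R) + 2) * m (k + 1) := by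
      rw [h.maxima_succ k hk, h.minima_succ k hk]
      exact min_le_max
    simpa [add_assoc, one_add_one_eq_two] using hle

variable [IsStrictOrderedRing R]

lemma of_times {T t : ℕ → R}
    (hT : ∀ n ≥ 1, T (n + 1) = min (T n + M n) (t n + m n))
    (ht : ∀ n ≥ 1, t (n + 1) = max (T n + M n) (t n + m n))
    (hM : ∀ n : ℕ, n ≥ 1 → (n : R) * M n = 1 + T n)
    (hm : ∀ n : ℕ, n ≥ 1 → ((n : R) + 1) * m n = 1 + t n) :
    IsExtremalValueRecursion M m := by
  have hMadd (n : ℕ) (hn : n ≥ 1) : ((n : R) + 1) * M n = 1 + (T n + M n) := by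
    linear_combination hM n hn
  have hmadd (n : ℕ) (hn : n ≥ 1) : ((n : R) + 2) * m n = 1 + (t n + m n) := by
    linear_combination hm n hn
  constructor <;> intro n hn
  · rw [hMadd n hn, hmadd n hn, min_add_add_left, ← hT n hn]
    exact_mod_cast hM (n + 1) n.succ_pos
  · rw [hMadd n hn, hmadd n hn, max_add_add_left, ← ht n hn, ← hm (n + 1) n.succ_pos]
    push_cast
    ring

lemma minima_mul_maxima_succ (h : IsExtremalValueRecursion M m) (hn : 1 ≤ n) :
    m (n + 1) * M (n + 1) = m n * M n := by
  have hpos : (0 : R) < ((n : R) + 1) * ((n : R) + 2) := by positivity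
  refine mul_left_cancel₀ hpos.ne' ?_
  calc ((n : R) + 1) * ((n : R) + 2) * (m (n + 1) * M (n + 1))
      = (((n : R) + 1) * M (n + 1)) * (((n : R) + 2) * m (n + 1)) := by ring
    _ = (((n : R) + 1) * M n) * (((n : R) + 2) * m n) := by
        rw [h.maxima_succ n hn, h.minima_succ n hn, min_mul_max]
    _ = ((n : R) + 1) * ((n : R) + 2) * (m n * M n) := by ring

lemma minima_mul_maxima (h : IsExtremalValueRecursion M m) (hn : 1 ≤ n) :
    m n * M n = m 1 * M 1 := by
  induction n, hn using Nat.le_induction with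
  | base => rfl
  | succ n hn ih => rw [h.minima_mul_maxima_succ hn, ih]

lemma maxima_succ_le (h : IsExtremalValueRecursion M m) (hn : 1 ≤ n) : M (n + 1) ≤ M n := by
  have hpos : (0 : R) < (n : R) + 1 := by positivity
  exact le_of_mul_le_mul_left ((h.maxima_succ n hn).trans_le (min_le_left _ _)) hpos

lemma minima_le_succ (h : IsExtremalValueRecursion M m) (hn : 1 ≤ n) : m n ≤ m (n + 1) := by
  have hpos : (0 : R) < (n : R) + 2 := by positivity
  exact le_of_mul_le_mul_left ((le_max_right _ _).trans_eq (h.minima_succ n hn).symm) hpos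

lemma antitoneOn_maxima (h : IsExtremalValueRecursion M m) : AntitoneOn M (Set.Ici 1) :=
  antitoneOn_nat_Ici_of_succ_le fun _ hn => h.maxima_succ_le hn

lemma monotoneOn_minima (h : IsExtremalValueRecursion M m) : MonotoneOn m (Set.Ici 1) :=
  monotoneOn_nat_Ici_of_le_succ fun _ hn => h.minima_le_succ hn

lemma minima_pos (h : IsExtremalValueRecursion M m) (hpos : 0 < m 1) (hn : 1 ≤ n) : 0 < m n :=
  hpos.trans_le (h.monotoneOn_minima Set.self_mem_Ici hn hn)

lemma minima_lt_maxima_succ (h : IsExtremalValueRecursion M m) (hn : 1 ≤ n) (hpos : 0 < m n)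
    (hlt : m n < M n) : m n < M (n + 1) := by
  have hn₀ : (0 : R) < (n : R) + 1 := by positivity
  refine lt_of_mul_lt_mul_left ?_ hn₀.le
  rw [h.maxima_succ n hn]
  exact lt_min (by gcongr) (mul_lt_mul_of_pos_right (by linarith) hpos)

lemma minima_succ_lt_maxima_succ (h : IsExtremalValueRecursion M m) (hn : 1 ≤ n) (hpos : 0 < m n)
    (hlt : m n < M n) (hle : (n : R) * M n ≤ ((n : R) + 1) * m n) :
    m (n + 1) < M (n + 1) := by
  have hn₁ : (0 : R) < (n : R) + 1 := by positivity
  have hn₂ : (0 : R) < (n : R) + 2 := by positivity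
  have hsq : ((n : R) + 1) ^ 2 * M n < ((n : R) + 2) ^ 2 * m n :=
    sq_add_one_mul_lt_sq_add_two_mul (mod_cast hn) hpos hle
  have hmax : ((n : R) + 1) * M n < ((n : R) + 2) * M (n + 1) := by
    refine lt_of_mul_lt_mul_left ?_ hn₁.le
    rw [mul_left_comm _ ((n : R) + 2), h.maxima_succ n hn, mul_min_of_nonneg _ _ hn₂.le]
    refine lt_min ?_ (by linarith)
    have hM : 0 < ((n : R) + 1) * M n := mul_pos hn₁ (hpos.trans hlt)
    exact mul_lt_mul_of_pos_right (by linarith) hM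
  refine lt_of_mul_lt_mul_left ?_ hn₂.le
  rw [h.minima_succ n hn]
  exact max_lt hmax (mul_lt_mul_of_pos_left (h.minima_lt_maxima_succ hn hpos hlt) hn₂)

lemma minima_lt_maxima (h : IsExtremalValueRecursion M m) (h₁ : M 1 ≤ 2 * m 1) (hlt : m 1 < M 1)
    (hn : 1 ≤ n) : m n < M n := by
  have hpos : 0 < m 1 := by linarith
  induction n, hn using Nat.le_induction with
  | base => exact hlt
  | succ n hn ih =>
    exact h.minima_succ_lt_maxima_succ hn (h.minima_pos hpos hn) ih
      (h.mul_maxima_le_mul_minima h₁ hn)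

end IsExtremalValueRecursion

section OrderedField

variable {K : Type*} [Field K] [LinearOrder K] [IsStrictOrderedRing K]

lemma add_mul_eq_of_eq_one_div_mul {c : K} (hc : 0 ≤ c) {f g : ℕ → K}
    (h₁ : (1 + c) * f 1 = g 1)
    (h : ∀ n : ℕ, n ≥ 1 → f (n + 1) = 1 / ((n : K) + (1 + c)) * g (n + 1)) :
    ∀ n : ℕ, n ≥ 1 → ((n : K) + c) * f n = g n := by
  intro n hn
  induction n, hn using Nat.le_induction with
  | base => simpa using h₁
  | succ k hk _ =>
    have hpos : (0 : K) < (k : K) + (1 + c) := by positivity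
    rw [h k hk, Nat.cast_succ, add_assoc, ← mul_assoc, mul_one_div_cancel hpos.ne', one_mul]

theorem mancala_riemann_sequences_properties_general (T M t m : ℕ → K)
    (hM1 : M 1 = 1 + T 1) (hm1 : 2 * m 1 = 1 + t 1) (hTt : T 1 ≤ t 1) (hmM : m 1 < M 1)
    (hT : ∀ n ≥ 1, T (n + 1) = min (T n + M n) (t n + m n))
    (ht : ∀ n ≥ 1, t (n + 1) = max (T n + M n) (t n + m n))
    (hM : ∀ n ≥ 1, M (n + 1) = (1 / ((n : K) + 1)) * (1 + T (n + 1)))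
    (hm : ∀ n ≥ 1, m (n + 1) = (1 / ((n : K) + 2)) * (1 + t (n + 1))) :
    ∀ n ≥ 1,
      m n * M n = m 1 * M 1 ∧
      m 1 ≤ m n ∧ m n ≤ m (n + 1) ∧
      M (n + 1) ≤ M n ∧ M n ≤ M 1 ∧
      m n < M n ∧
      T n ≤ t n ∧
      t n < T (n + 1) := by
  have hMT : ∀ n : ℕ, n ≥ 1 → (n : K) * M n = 1 + T n := by
    simpa using add_mul_eq_of_eq_one_div_mul le_rfl (g := fun n => 1 + T n)
      (by simpa using hM1) (by simpa using hM)
  have hmt : ∀ n : ℕ, n ≥ 1 → ((n : K) + 1) * m n = 1 + t n :=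
    add_mul_eq_of_eq_one_div_mul zero_le_one (g := fun n => 1 + t n)
      (by simpa [one_add_one_eq_two] using hm1) (by simpa [one_add_one_eq_two] using hm)
  have h : IsExtremalValueRecursion M m := .of_times hT ht hMT hmt
  have h₁ : M 1 ≤ 2 * m 1 := by linarith
  have hpos : 0 < m 1 := by linarith
  intro n hn
  have hlt : m n < M n := h.minima_lt_maxima h₁ hmM hn
  have hTt_n : T n ≤ t n := by
    linarith [h.mul_maxima_le_mul_minima h₁ hn, hMT n hn, hmt n hn]
  have htT_succ : t n < T (n + 1) := by
    rw [hT n hn]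
    have hm_pos : 0 < m n := h.minima_pos hpos hn
    have hmul : ((n : K) + 1) * m n < ((n : K) + 1) * M n := by gcongr
    exact lt_min (by linarith [hMT n hn, hmt n hn]) (by linarith)
  exact ⟨h.minima_mul_maxima hn, h.monotoneOn_minima Set.self_mem_Ici hn hn, h.minima_le_succ hn,
    h.maxima_succ_le hn, h.antitoneOn_maxima Set.self_mem_Ici hn hn, hlt, hTt_n, htT_succ⟩

end OrderedField

/-- Properties of the Riemann-problem sequences:
with `T₁ = t₁ = 1`, `M₁ = 2`, `m₁ = 1`, `α_n = 1/(n+1)`,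
`T_{n+1} = min(T_n + M_n, t_n + m_n)`, `t_{n+1} = max(T_n + M_n, t_n + m_n)`,
`M_{n+1} = α_n (1 + T_{n+1})`, `m_{n+1} = α_{n+1} (1 + t_{n+1})`,
one has, for all `n ≥ 1`:
(a) `m_n M_n = 2`, (b) `1 ≤ m_n ≤ m_{n+1}` and `M_{n+1} ≤ M_n ≤ 2`,
(c) `m_n < M_n`, (d) `T_n ≤ t_n`, (e) `t_n < T_{n+1}`. -/
theorem mancala_riemann_sequences_properties
    (T M t m : ℕ → ℝ)
    (hT1 : T 1 = 1) (hM1 : M 1 = 2) (ht1 : t 1 = 1) (hm1 : m 1 = 1)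
    (hT : ∀ n ≥ 1, T (n + 1) = min (T n + M n) (t n + m n))
    (ht : ∀ n ≥ 1, t (n + 1) = max (T n + M n) (t n + m n))
    (hM : ∀ n ≥ 1, M (n + 1) = (1 / ((n : ℝ) + 1)) * (1 + T (n + 1)))
    (hm : ∀ n ≥ 1, m (n + 1) = (1 / ((n : ℝ) + 2)) * (1 + t (n + 1))) :
    ∀ n ≥ 1,
      m n * M n = 2 ∧
      1 ≤ m n ∧ m n ≤ m (n + 1) ∧
      M (n + 1) ≤ M n ∧ M n ≤ 2 ∧
      m n < M n ∧
      T n ≤ t n ∧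
      t n < T (n + 1) := by
  simpa only [hM1, hm1, one_mul] using mancala_riemann_sequences_properties_general T M t m
    (by norm_num [hM1, hT1]) (by norm_num [hm1, ht1]) (by rw [hT1, ht1]) (by norm_num [hM1, hm1])
    hT ht hM hm
end

section
/- Define real sequences (T_n), (M_n), (t_n), (m_n) for n ≥ 1 by: T_1 = 1, M_1 = 2, t_1 = 1, m_1 = 1, and for n ≥ 1, with α_n := 1/(n+1), set T_{n+1} := min(T_n + M_n, t_n + m_n), t_{n+1} := max(T_n + M_n, t_n + m_n), M_{n+1} := α_n·(1 + T_{n+1}), m_{n+1} := α_{n+1}·(1 + t_{n+1}). Then lim_{n→∞} m_n = lim_{n→∞} M_n = √2. -/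
open Filter Topology

/-!
In terms of the extremal values `M` and `m` alone the recursion keeps or swaps two numbers: since
`1 + T n = n * M n` and `1 + t n = (n + 1) * m n`, the numbers `(n + 1) * M (n + 1)` and
`(n + 2) * m (n + 1)` are the minimum and the maximum of `(n + 1) * M n` and `(n + 2) * m n`. The
product of the minimum and the maximum of two numbers is the product of the numbers, so `M n * m n`
is conserved. The minimum being at most the maximum gives `M n / m n ≤ 1 + 1 / n`, and this bound is
what propagates `m n ≤ M n` through a swap. Two positive sequences with constant product whose
quotient tends to `1` converge to the square root of that product.
-/

/-- The recursion of the Riemann-problem sequences for the values `M n` and `m n` of the local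
extrema, after elimination of the times `T n` and `t n`. It is indexed from `1`, and stated for
`(n + 1) * M (n + 1)` and `(n + 2) * m (n + 1)` to avoid divisions. -/
structure IsExtremaRecursion (M m : ℕ → ℝ) : Prop where
  mul_upper_succ : ∀ n : ℕ, 1 ≤ n →
    ((n : ℝ) + 1) * M (n + 1) = min ((n + 1) * M n) ((n + 2) * m n)
  mul_lower_succ : ∀ n : ℕ, 1 ≤ n →
    ((n : ℝ) + 2) * m (n + 1) = max ((n + 1) * M n) ((n + 2) * m n)

/-- The invariant of `IsExtremaRecursion`: the values `a = M n` and `b = m n` at the index `x = n`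
are positive and their quotient `a / b` lies in `[1, 1 + 1 / x]`. -/
structure ExtremaBounds (x a b : ℝ) : Prop where
  lower_pos : 0 < b
  lower_le_upper : b ≤ a
  mul_upper_le : x * a ≤ (x + 1) * b

namespace ExtremaBounds

variable {x a b a' b' : ℝ}

theorem upper_pos (h : ExtremaBounds x a b) : 0 < a :=
  h.lower_pos.trans_le h.lower_le_upper

theorem div_le (hx : 0 < x) (h : ExtremaBounds x a b) : a / b ≤ 1 + 1 / x := by
  rw [div_le_iff₀ h.lower_pos, one_add_div hx.ne', div_mul_eq_mul_div, le_div_iff₀' hx]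
  exact h.mul_upper_le

theorem sq_mul_upper_le (hx : 1 ≤ x) (h : ExtremaBounds x a b) :
    (x + 1) ^ 2 * a ≤ (x + 2) ^ 2 * b := by
  have hb := h.lower_pos
  have hcube : (x + 1) ^ 3 ≤ x * (x + 2) ^ 2 := by nlinarith
  refine le_of_mul_le_mul_left ?_ (zero_lt_one.trans_le hx)
  calc x * ((x + 1) ^ 2 * a) = (x + 1) ^ 2 * (x * a) := by ring
    _ ≤ (x + 1) ^ 2 * ((x + 1) * b) :=
        mul_le_mul_of_nonneg_left h.mul_upper_le (sq_nonneg _)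
    _ = (x + 1) ^ 3 * b := by ring
    _ ≤ x * (x + 2) ^ 2 * b := by gcongr
    _ = x * ((x + 2) ^ 2 * b) := by ring

theorem succ (hx : 1 ≤ x) (h : ExtremaBounds x a b)
    (ha' : (x + 1) * a' = min ((x + 1) * a) ((x + 2) * b))
    (hb' : (x + 2) * b' = max ((x + 1) * a) ((x + 2) * b)) :
    ExtremaBounds (x + 1) a' b' where
  lower_pos := by
    have hb := h.lower_pos
    have : 0 < (x + 2) * b' := hb' ▸ lt_max_of_lt_right (by positivity)
    exact pos_of_mul_pos_right this (by linarith)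
  lower_le_upper := by
    have ha := h.upper_pos
    have hb := h.lower_pos
    have hba := h.lower_le_upper
    have hsq := h.sq_mul_upper_le hx
    have : 0 < x := by linarith
    have hmaxmin : (x + 1) * max ((x + 1) * a) ((x + 2) * b) ≤
        (x + 2) * min ((x + 1) * a) ((x + 2) * b) := by
      rw [mul_max_of_nonneg _ _ (by linarith), mul_min_of_nonneg _ _ (by linarith)]
      refine max_le (le_min ?_ ?_) (le_min ?_ ?_)
      · gcongr
        norm_num
      · linarith
      · rw [mul_left_comm]
        gcongr
      · gcongr
        norm_num
    rw [← ha', ← hb'] at hmaxmin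
    refine le_of_mul_le_mul_left ?_ (by positivity : 0 < (x + 1) * (x + 2))
    linarith
  mul_upper_le := by
    calc (x + 1) * a' ≤ (x + 2) * b' := ha' ▸ hb' ▸ min_le_max
      _ = (x + 1 + 1) * b' := by ring

end ExtremaBounds

theorem tendsto_sqrt_of_mul_eq_of_tendsto_div {α : Type*} {l : Filter α} {f g : α → ℝ} {c : ℝ}
    (hf : ∀ᶠ x in l, 0 ≤ f x) (hg : ∀ᶠ x in l, g x ≠ 0) (hfg : ∀ᶠ x in l, f x * g x = c)
    (hdiv : Tendsto (fun x ↦ f x / g x) l (𝓝 1)) :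
    Tendsto f l (𝓝 √c) := by
  have hsqrt : Tendsto (fun x ↦ √(c * (f x / g x))) l (𝓝 √c) := by
    simpa only [mul_one] using (hdiv.const_mul c).sqrt
  refine hsqrt.congr' ?_
  filter_upwards [hf, hg, hfg] with x hfx hgx hfgx
  rw [← hfgx, mul_assoc, mul_div_cancel₀ _ hgx, Real.sqrt_mul_self hfx]

namespace IsExtremaRecursion

variable {M m : ℕ → ℝ}

theorem mul_eq (h : IsExtremaRecursion M m) {n : ℕ} (hn : 1 ≤ n) : M n * m n = M 1 * m 1 := by
  induction n, hn using Nat.le_induction with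
  | base => rfl
  | succ n hn ih =>
    rw [← ih]
    have hprod : ((n + 1) * M (n + 1)) * ((n + 2) * m (n + 1)) =
        ((n + 1) * M n) * ((n + 2) * m n) := by
      rw [h.mul_upper_succ n hn, h.mul_lower_succ n hn, min_mul_max]
    refine mul_left_cancel₀ (by positivity : ((n : ℝ) + 1) * (n + 2) ≠ 0) ?_
    linear_combination hprod

theorem extremaBounds (h : IsExtremaRecursion M m) (h1 : ExtremaBounds 1 (M 1) (m 1)) {n : ℕ}
    (hn : 1 ≤ n) : ExtremaBounds n (M n) (m n) := by
  induction n, hn using Nat.le_induction with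
  | base => simpa only [Nat.cast_one] using h1
  | succ n hn ih =>
    rw [Nat.cast_succ]
    exact ih.succ (Nat.one_le_cast.2 hn) (h.mul_upper_succ n hn) (h.mul_lower_succ n hn)

theorem tendsto_div (h : IsExtremaRecursion M m) (h1 : ExtremaBounds 1 (M 1) (m 1)) :
    Tendsto (fun n ↦ M n / m n) atTop (𝓝 1) := by
  have hupper : Tendsto (fun n : ℕ ↦ 1 + 1 / (n : ℝ)) atTop (𝓝 1) := by
    simpa only [add_zero] using tendsto_one_div_atTop_nhds_zero_nat.const_add (1 : ℝ)
  refine tendsto_of_tendsto_of_tendsto_of_le_of_le' tendsto_const_nhds hupper ?_ ?_ <;>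
    filter_upwards [eventually_ge_atTop 1] with n hn
  · have hb := h.extremaBounds h1 hn
    exact (one_le_div hb.lower_pos).2 hb.lower_le_upper
  · exact (h.extremaBounds h1 hn).div_le (Nat.cast_pos.2 hn)

theorem tendsto_sqrt (h : IsExtremaRecursion M m) (h1 : ExtremaBounds 1 (M 1) (m 1)) :
    Tendsto m atTop (𝓝 √(M 1 * m 1)) ∧ Tendsto M atTop (𝓝 √(M 1 * m 1)) := by
  have hM : ∀ᶠ n in atTop, 0 < M n :=
    (eventually_ge_atTop 1).mono fun n hn ↦ (h.extremaBounds h1 hn).upper_pos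
  have hm : ∀ᶠ n in atTop, 0 < m n :=
    (eventually_ge_atTop 1).mono fun n hn ↦ (h.extremaBounds h1 hn).lower_pos
  have hMm : ∀ᶠ n in atTop, M n * m n = M 1 * m 1 :=
    (eventually_ge_atTop 1).mono fun n hn ↦ h.mul_eq hn
  have hdiv := h.tendsto_div h1
  have hdiv' : Tendsto (fun n ↦ m n / M n) atTop (𝓝 1) := by
    simpa only [inv_div, inv_one] using hdiv.inv₀ one_ne_zero
  constructor
  · exact tendsto_sqrt_of_mul_eq_of_tendsto_div (hm.mono fun _ ↦ le_of_lt)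
      (hM.mono fun _ ↦ ne_of_gt) (hMm.mono fun n hn ↦ (mul_comm _ _).trans hn) hdiv'
  · exact tendsto_sqrt_of_mul_eq_of_tendsto_div (hM.mono fun _ ↦ le_of_lt)
      (hm.mono fun _ ↦ ne_of_gt) hMm hdiv

end IsExtremaRecursion

theorem one_add_eq_mul {s : ℝ} (hs : 0 ≤ s) {u v : ℕ → ℝ} (h1 : 1 + u 1 = (1 + s) * v 1)
    (hv : ∀ n ≥ 1, v (n + 1) = 1 / ((n : ℝ) + 1 + s) * (1 + u (n + 1))) {n : ℕ} (hn : 1 ≤ n) :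
    1 + u n = (n + s) * v n := by
  induction n, hn using Nat.le_induction with
  | base => simpa only [Nat.cast_one] using h1
  | succ n hn _ =>
    rw [hv n hn, Nat.cast_succ, ← mul_assoc, mul_one_div_cancel (by positivity), one_mul]

theorem isExtremaRecursion_of_min_max {T M t m : ℕ → ℝ}
    (hT : ∀ n ≥ 1, T (n + 1) = min (T n + M n) (t n + m n))
    (ht : ∀ n ≥ 1, t (n + 1) = max (T n + M n) (t n + m n))
    (hTM : ∀ n ≥ 1, 1 + T n = n * M n) (htm : ∀ n ≥ 1, 1 + t n = (n + 1) * m n) :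
    IsExtremaRecursion M m := by
  have hx {n : ℕ} (hn : n ≥ 1) : 1 + (T n + M n) = (n + 1) * M n := by
    linear_combination hTM n hn
  have hy {n : ℕ} (hn : n ≥ 1) : 1 + (t n + m n) = (n + 2) * m n := by
    linear_combination htm n hn
  constructor <;> intro n hn <;> rw [← hx hn, ← hy hn]
  · rw [← Nat.cast_succ, ← hTM (n + 1) n.succ_pos, hT n hn, min_add_add_left]
  · rw [max_add_add_left, ← ht n hn, htm (n + 1) n.succ_pos, Nat.cast_succ]
    ring

theorem mancala_riemann_sequences_limit_general
    {T M t m : ℕ → ℝ}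
    (hT1 : 1 + T 1 = M 1) (ht1 : 1 + t 1 = 2 * m 1)
    (hm1 : 0 < m 1) (hmM1 : m 1 ≤ M 1) (hTt1 : T 1 ≤ t 1)
    (hT : ∀ n ≥ 1, T (n + 1) = min (T n + M n) (t n + m n))
    (ht : ∀ n ≥ 1, t (n + 1) = max (T n + M n) (t n + m n))
    (hM : ∀ n ≥ 1, M (n + 1) = (1 / ((n : ℝ) + 1)) * (1 + T (n + 1)))
    (hm : ∀ n ≥ 1, m (n + 1) = (1 / ((n : ℝ) + 2)) * (1 + t (n + 1))) :
    Tendsto m atTop (𝓝 √(M 1 * m 1)) ∧ Tendsto M atTop (𝓝 √(M 1 * m 1)) := by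
  have hTM : ∀ n ≥ 1, 1 + T n = n * M n := fun n hn ↦ by
    simpa only [add_zero] using one_add_eq_mul (u := T) (v := M) le_rfl
      (by simpa only [add_zero, one_mul] using hT1) (by simpa only [add_zero] using hM) hn
  have htm : ∀ n ≥ 1, 1 + t n = (n + 1) * m n := fun n hn ↦
    one_add_eq_mul zero_le_one (by simpa only [one_add_one_eq_two] using ht1)
      (by simpa only [add_assoc, one_add_one_eq_two] using hm) hn
  exact (isExtremaRecursion_of_min_max hT ht hTM htm).tendsto_sqrt ⟨hm1, hmM1, by linarith⟩

/-- Asymptotics of the Riemann-problem sequences: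
with `T₁ = t₁ = 1`, `M₁ = 2`, `m₁ = 1`, `α_n = 1/(n+1)`,
`T_{n+1} = min(T_n + M_n, t_n + m_n)`, `t_{n+1} = max(T_n + M_n, t_n + m_n)`,
`M_{n+1} = α_n (1 + T_{n+1})`, `m_{n+1} = α_{n+1} (1 + t_{n+1})`,
both `m_n` and `M_n` converge to `√2`. -/
theorem mancala_riemann_sequences_limit
    (T M t m : ℕ → ℝ)
    (hT1 : T 1 = 1) (hM1 : M 1 = 2) (ht1 : t 1 = 1) (hm1 : m 1 = 1)
    (hT : ∀ n ≥ 1, T (n + 1) = min (T n + M n) (t n + m n))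
    (ht : ∀ n ≥ 1, t (n + 1) = max (T n + M n) (t n + m n))
    (hM : ∀ n ≥ 1, M (n + 1) = (1 / ((n : ℝ) + 1)) * (1 + T (n + 1)))
    (hm : ∀ n ≥ 1, m (n + 1) = (1 / ((n : ℝ) + 2)) * (1 + t (n + 1))) :
    Tendsto m atTop (𝓝 (Real.sqrt 2)) ∧
    Tendsto M atTop (𝓝 (Real.sqrt 2)) := by
  simpa only [hM1, hm1, mul_one] using mancala_riemann_sequences_limit_general
    (by norm_num [hT1, hM1]) (by norm_num [ht1, hm1]) (by norm_num [hm1]) (by norm_num [hm1, hM1])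
    (by rw [hT1, ht1]) hT ht hM hm
end
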